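/- arXiv:1911.03297 — 8 statements merged into one kernel-verified Lean document; each statement's English description precedes it below -/
import Mathlib

section
/- Let G be a finite simple graph on n ≥ 1 vertices, let k ≥ 1 with k ∣ n, and let G′ be the graph obtained from G by adding a set D of n/k new vertices, where D is an independent set and every vertex of D is adjacent to every vertex of G. Then G admits an equitable k-coloring if and only if G′ admits an equitable (k+1)-coloring. -/
/-- `φ` is a proper coloring of the simple graph `G`. -/
def IsProperColoring {V : Type*} {k : ℕ} (G : SimpleGraph V) (φ : V → Fin k) : Prop :=
  ∀ u v : V, G.Adj u v → φ u ≠ φ v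

/-- Every color class of `φ` has size `⌊n/k⌋` or `⌈n/k⌉`, where `n` is the number of
vertices. -/
def IsEquitable {V : Type*} [Fintype V] {k : ℕ} (φ : V → Fin k) : Prop :=
  ∀ i : Fin k,
    (Finset.univ.filter fun v => φ v = i).card = Fintype.card V / k ∨
    (Finset.univ.filter fun v => φ v = i).card = (Fintype.card V + k - 1) / k

/-- The graph obtained from `G` by adding `m` new vertices forming an independent set `D`,
each of them adjacent to every vertex of `G`. -/
def addDominating {V : Type*} (G : SimpleGraph V) (m : ℕ) : SimpleGraph (V ⊕ Fin m) :=
  SimpleGraph.fromRel fun a b =>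
    match a, b with
    | Sum.inl u, Sum.inl v => G.Adj u v
    | Sum.inl _, Sum.inr _ => True
    | Sum.inr _, Sum.inl _ => True
    | Sum.inr _, Sum.inr _ => False

/-!
Adjoining `⌊n/k⌋` vertices and one color changes neither `⌊n/k⌋` nor `⌈n/k⌉`, so an equitable
`k`-coloring stays equitable when all new vertices receive one new color. Conversely, in an
equitable `(k + 1)`-coloring of the extended graph some color is used by exactly the new vertices:
the color of a new vertex does not occur on `G`, and its class has at least `⌊n/k⌋` elements, so it
consists of all the new vertices. If `⌊n/k⌋ = 0`, there are fewer than `k` vertices and any unused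
color will do.
-/

section Arithmetic

variable {n k : ℕ}

lemma add_div_div_add_one (hk : 0 < k) : (n + n / k) / (k + 1) = n / k := by
  refine eq_of_forall_le_iff fun c ↦ ?_
  rw [Nat.le_div_iff_mul_le (by lia), Nat.le_div_iff_mul_le hk, mul_add_one]
  refine ⟨fun h ↦ ?_, fun h ↦ add_le_add h ((Nat.le_div_iff_mul_le hk).2 h)⟩
  by_contra! hlt
  have : n / k < c := (Nat.div_lt_iff_lt_mul hk).2 hlt
  lia

lemma add_div_ceilDiv_add_one (hk : 0 < k) : (n + n / k) ⌈/⌉ (k + 1) = n ⌈/⌉ k := by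
  refine eq_of_forall_ge_iff fun c ↦ ?_
  rw [ceilDiv_le_iff_le_mul (by lia), ceilDiv_le_iff_le_mul hk, add_one_mul]
  refine ⟨fun h ↦ ?_, fun h ↦ add_le_add h (Nat.div_le_of_le_mul h)⟩
  by_contra! hlt
  have : c ≤ n / k := (Nat.le_div_iff_mul_le hk).2 (mul_comm k c ▸ hlt.le)
  lia

end Arithmetic

lemma card_filter_univ_sum {α β : Type*} [Fintype α] [Fintype β] (p : α ⊕ β → Prop)
    [DecidablePred p] :
    (Finset.univ.filter p).card = (Finset.univ.filter fun a ↦ p (Sum.inl a)).card +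
      (Finset.univ.filter fun b ↦ p (Sum.inr b)).card := by
  simp only [Finset.card_filter, Fintype.sum_sum_type]

lemma IsEquitable.div_le_card_filter {V : Type*} [Fintype V] {k : ℕ} {φ : V → Fin k}
    (hφ : IsEquitable φ) (i : Fin k) :
    Fintype.card V / k ≤ (Finset.univ.filter fun v ↦ φ v = i).card := by
  have hk : 0 < k := i.pos
  rcases hφ i with h | h
  · exact h.ge
  · exact h ▸ Nat.div_le_div_right (by lia)

section AddDominating

variable {V : Type*} {m : ℕ} (G : SimpleGraph V)

@[simp]
lemma addDominating_adj_inl_inl {u v : V} :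
    (addDominating G m).Adj (Sum.inl u) (Sum.inl v) ↔ G.Adj u v := by
  simpa [addDominating, G.adj_comm v u] using SimpleGraph.Adj.ne

@[simp]
lemma addDominating_adj_inl_inr (v : V) (d : Fin m) :
    (addDominating G m).Adj (Sum.inl v) (Sum.inr d) := by
  simp [addDominating]

@[simp]
lemma not_addDominating_adj_inr_inr (d e : Fin m) :
    ¬ (addDominating G m).Adj (Sum.inr d) (Sum.inr e) := by
  simp [addDominating]

end AddDominating

/-- The extension of a `k`-coloring `φ` of `V` to a `(k + 1)`-coloring of `V ⊕ D` in which `c` is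
the color of exactly the elements of `D`; `c.succAbove` renames the colors of `φ` to the colors
other than `c`. -/
def extendColoring {V D : Type*} {k : ℕ} (c : Fin (k + 1)) (φ : V → Fin k) :
    V ⊕ D → Fin (k + 1) :=
  Sum.elim (fun v ↦ c.succAbove (φ v)) fun _ ↦ c

section ExtendColoring

variable {V D : Type*} {k m : ℕ}

@[simp]
lemma extendColoring_inl (c : Fin (k + 1)) (φ : V → Fin k) (v : V) :
    extendColoring (D := D) c φ (Sum.inl v) = c.succAbove (φ v) :=
  rfl

@[simp]
lemma extendColoring_inr (c : Fin (k + 1)) (φ : V → Fin k) (d : D) :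
    extendColoring c φ (Sum.inr d) = c :=
  rfl

lemma exists_eq_extendColoring {ψ : V ⊕ D → Fin (k + 1)} {c : Fin (k + 1)}
    (hinl : ∀ v, ψ (Sum.inl v) ≠ c) (hinr : ∀ d, ψ (Sum.inr d) = c) :
    ∃ φ, ψ = extendColoring c φ := by
  choose φ hφ using fun v ↦ Fin.exists_succAbove_eq (hinl v)
  exact ⟨φ, funext (Sum.rec (fun v ↦ (hφ v).symm) hinr)⟩

lemma isProperColoring_extendColoring_iff {G : SimpleGraph V} {c : Fin (k + 1)} {φ : V → Fin k} :
    IsProperColoring (addDominating G m) (extendColoring c φ) ↔ IsProperColoring G φ := by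
  constructor
  · intro h u v huv heq
    exact h (Sum.inl u) (Sum.inl v) (by simpa using huv) (by simp [heq])
  · rintro h (u | d) (v | e) hadj
    · simpa using h u v (by simpa using hadj)
    · exact c.succAbove_ne (φ u)
    · exact c.ne_succAbove (φ v)
    · exact absurd hadj (not_addDominating_adj_inr_inr G d e)

variable [Fintype V] [Fintype D]

lemma card_filter_extendColoring_self (c : Fin (k + 1)) (φ : V → Fin k) :
    (Finset.univ.filter fun x : V ⊕ D ↦ extendColoring c φ x = c).card = Fintype.card D := by
  simp [card_filter_univ_sum, Fin.succAbove_ne]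

lemma card_filter_extendColoring_succAbove (c : Fin (k + 1)) (φ : V → Fin k) (i : Fin k) :
    (Finset.univ.filter fun x : V ⊕ D ↦ extendColoring c φ x = c.succAbove i).card =
      (Finset.univ.filter fun v ↦ φ v = i).card := by
  simp [card_filter_univ_sum, Fin.ne_succAbove]

lemma isEquitable_extendColoring_iff {c : Fin (k + 1)} {φ : V → Fin k} (hk : 0 < k)
    (hD : Fintype.card D = Fintype.card V / k) :
    IsEquitable (extendColoring (D := D) c φ) ↔ IsEquitable φ := by
  simp only [IsEquitable, ← Nat.ceilDiv_eq_add_pred_div, Fintype.card_sum, hD,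
    add_div_div_add_one hk, add_div_ceilDiv_add_one hk, Fin.forall_iff_succAbove c,
    card_filter_extendColoring_self, card_filter_extendColoring_succAbove, true_or, true_and]

end ExtendColoring

lemma inr_eq_of_card_le_card_filter {V D α : Type*} [Fintype V] [Fintype D] [DecidableEq α]
    {ψ : V ⊕ D → α} {c : α} (hinl : ∀ v, ψ (Sum.inl v) ≠ c)
    (hcard : Fintype.card D ≤ (Finset.univ.filter fun x ↦ ψ x = c).card) (d : D) :
    ψ (Sum.inr d) = c := by
  have hle : Fintype.card D ≤ (Finset.univ.filter fun e ↦ ψ (Sum.inr e) = c).card := by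
    simpa [card_filter_univ_sum, hinl] using hcard
  exact Finset.card_filter_eq_iff.1 (le_antisymm (Finset.card_filter_le _ _) hle) d
    (Finset.mem_univ d)

lemma exists_color_forall_inl_ne_and_forall_inr_eq {V : Type*} [Fintype V] {G : SimpleGraph V}
    {k : ℕ} (hk : 0 < k) {ψ : V ⊕ Fin (Fintype.card V / k) → Fin (k + 1)}
    (hproper : IsProperColoring (addDominating G (Fintype.card V / k)) ψ)
    (hequitable : IsEquitable ψ) :
    ∃ c, (∀ v, ψ (Sum.inl v) ≠ c) ∧ ∀ d, ψ (Sum.inr d) = c := by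
  rcases lt_or_ge (Fintype.card V) k with hV | hV
  · have : IsEmpty (Fin (Fintype.card V / k)) := by
      rw [Nat.div_eq_of_lt hV]
      infer_instance
    have hnot_surj : ¬ Function.Surjective fun v ↦ ψ (Sum.inl v) := fun hsurj ↦ by
      have hcard : k + 1 ≤ Fintype.card V := by simpa using Fintype.card_le_of_surjective _ hsurj
      lia
    obtain ⟨c, hc⟩ := not_forall.1 hnot_surj
    exact ⟨c, not_exists.1 hc, isEmptyElim⟩
  · let d : Fin (Fintype.card V / k) := ⟨0, Nat.div_pos hV hk⟩
    have hinl (v : V) : ψ (Sum.inl v) ≠ ψ (Sum.inr d) :=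
      hproper _ _ (addDominating_adj_inl_inr G v d)
    refine ⟨ψ (Sum.inr d), hinl, inr_eq_of_card_le_card_filter hinl ?_⟩
    simpa [add_div_div_add_one hk] using hequitable.div_le_card_filter (ψ (Sum.inr d))

theorem stmt1_general {V : Type*} [Fintype V] (G : SimpleGraph V) {k : ℕ} (hk : 0 < k) :
    (∃ φ : V → Fin k, IsProperColoring G φ ∧ IsEquitable φ) ↔
    (∃ ψ : V ⊕ Fin (Fintype.card V / k) → Fin (k + 1),
      IsProperColoring (addDominating G (Fintype.card V / k)) ψ ∧ IsEquitable ψ) := by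
  have hD : Fintype.card (Fin (Fintype.card V / k)) = Fintype.card V / k := Fintype.card_fin _
  constructor
  · rintro ⟨φ, hproper, hequitable⟩
    exact ⟨extendColoring (Fin.last k) φ, isProperColoring_extendColoring_iff.2 hproper,
      (isEquitable_extendColoring_iff hk hD).2 hequitable⟩
  · rintro ⟨ψ, hproper, hequitable⟩
    obtain ⟨c, hinl, hinr⟩ := exists_color_forall_inl_ne_and_forall_inr_eq hk hproper hequitable
    obtain ⟨φ, rfl⟩ := exists_eq_extendColoring hinl hinr
    exact ⟨φ, isProperColoring_extendColoring_iff.1 hproper,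
      (isEquitable_extendColoring_iff hk hD).1 hequitable⟩

/-- `G` admits an equitable `k`-coloring iff the graph obtained from `G` by adding an
independent set of `n/k` new universal vertices admits an equitable `(k+1)`-coloring. -/
theorem stmt1 {V : Type*} [Fintype V] (G : SimpleGraph V) (n k : ℕ)
    (hn : n = Fintype.card V) (hn1 : 1 ≤ n) (hk : 1 ≤ k) (hdvd : k ∣ n) :
    (∃ φ : V → Fin k, IsProperColoring G φ ∧ IsEquitable φ) ↔
    (∃ ψ : V ⊕ Fin (n / k) → Fin (k + 1),
      IsProperColoring (addDominating G (n / k)) ψ ∧ IsEquitable ψ) := by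
  subst hn
  exact stmt1_general G hk
end

section
/- Let G be a finite simple graph on n vertices, let U ⊆ V(G) be such that G − U is a complete graph, and let k be an integer with k > |U|. Let m be the maximum size of a matching in the complement graph of G (equivalently, the maximum number of pairwise disjoint pairs {u, v} of vertices of G with uv ∉ E(G)). Then G admits an equitable k-coloring if and only if n ≤ k + m. -/
/-!
An equitable `k`-coloring of at most `2k` vertices has all classes of size at most two, and then
the classes of size two form a matching of the complement with at least `n - k` pairs. The clique
outside `U` receives distinct colors, which forces `n ≤ |U| + k ≤ 2k`. Conversely, an
injective coloring serves if `n ≤ k`; otherwise a matching of the complement with exactly `n - k`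
pairs can be merged into color classes, leaving `k` classes of size one or two.
-/

/-- A family of pairwise disjoint non-adjacent pairs of distinct vertices of `G`, that is, a
matching of the complement graph. Its pairs are ordered and indexed by an arbitrary type. -/
def IsNonadjMatching {V ι : Type*} (G : SimpleGraph V) (f : ι → V × V) : Prop :=
  (∀ a : ι, (f a).1 ≠ (f a).2 ∧ ¬ G.Adj (f a).1 (f a).2) ∧
  (∀ a b : ι, a ≠ b →
    (f a).1 ≠ (f b).1 ∧ (f a).1 ≠ (f b).2 ∧
    (f a).2 ≠ (f b).1 ∧ (f a).2 ≠ (f b).2)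

section Fibers

open Finset

variable {α β ι : Type*} [Fintype α]

theorem card_le_card_add_card_of_card_fiber_le_two [Fintype β] [DecidableEq β] {φ : α → β}
    (hφ : ∀ b, #{a | φ a = b} ≤ 2) :
    Fintype.card α ≤ Fintype.card β + Fintype.card {b // 1 < #{a | φ a = b}} :=
  calc Fintype.card α = ∑ b, #{a | φ a = b} :=
        card_eq_sum_card_fiberwise fun a _ => mem_univ (φ a)
    _ ≤ ∑ b, (1 + if 1 < #{a | φ a = b} then 1 else 0) := by
        gcongr with b
        have := hφ b
        split_ifs <;> omega
    _ = Fintype.card β + Fintype.card {b // 1 < #{a | φ a = b}} := by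
        simp [sum_add_distrib, Fintype.card_subtype]

theorem exists_equiv_sum_of_injective [Fintype β] [Fintype ι] {y : ι → α}
    (hy : Function.Injective y)
    (hcard : Fintype.card α = Fintype.card β + Fintype.card ι) :
    ∃ e : β ⊕ ι ≃ α, ∀ a, e (Sum.inr a) = y a := by
  classical
  have hcompl : Fintype.card β = Fintype.card ↥(Set.range y)ᶜ := by
    rw [Fintype.card_compl_set, Set.card_range_of_injective hy]
    omega
  refine ⟨(Equiv.sumComm β ι).trans (((Equiv.ofInjective y hy).sumCongr
    (Fintype.equivOfCardEq hcompl)).trans (Equiv.Set.sumCompl (Set.range y))), fun a => ?_⟩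
  simp

theorem card_fiber_of_equiv_sum [Fintype ι] [DecidableEq β] {φ : α → β} (e : β ⊕ ι ≃ α)
    (he : ∀ b, φ (e (Sum.inl b)) = b) (b : β) :
    #{a | φ a = b} = 1 + #{a | φ (e (Sum.inr a)) = b} := by
  classical
  have : Finite β := .of_injective (e ∘ Sum.inl) (e.injective.comp Sum.inl_injective)
  have := Fintype.ofFinite β
  simp only [card_filter, ← e.sum_comp, Fintype.sum_sum_type, he, sum_ite_eq', mem_univ, if_true]

end Fibers

section Coloring

open Finset

variable {V ι : Type*} {G : SimpleGraph V} {k : ℕ} {f : ι → V × V} {φ : V → Fin k}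

theorem IsProperColoring.card_le_card_add [Fintype V] {U : Finset V} (hφ : IsProperColoring G φ)
    (hclique : ∀ u v : V, u ∉ U → v ∉ U → u ≠ v → G.Adj u v) :
    Fintype.card V ≤ #U + k := by
  classical
  have hinj : Set.InjOn φ (Uᶜ : Finset V) := fun u hu v hv huv => by
    by_contra hne
    exact hφ u v (hclique u v (mem_compl.1 hu) (mem_compl.1 hv) hne) huv
  calc Fintype.card V = #U + #Uᶜ := (card_add_card_compl U).symm
    _ = #U + #(Uᶜ.image φ) := by rw [card_image_of_injOn hinj]
    _ ≤ #U + k := by simpa using card_le_univ (Uᶜ.image φ)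

theorem IsEquitable.card_class_le_of_card_le_mul [Fintype V] {b : ℕ} (hφ : IsEquitable φ)
    (hcard : Fintype.card V ≤ k * b) (i : Fin k) : #{v | φ v = i} ≤ b := by
  have hk : 0 < k := i.pos
  rcases hφ i with h | h <;> rw [h]
  · exact Nat.div_le_of_le_mul hcard
  · rwa [← Nat.ceilDiv_eq_add_pred_div, ceilDiv_le_iff_le_mul hk]

theorem isEquitable_of_card_class_le_add_one [Fintype V]
    (hφ : ∀ i j, #{v | φ v = i} ≤ #{v | φ v = j} + 1) : IsEquitable φ := by
  intro i
  have hk : 0 < k := i.pos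
  have hsum : Fintype.card V = ∑ j, #{v | φ v = j} :=
    card_eq_sum_card_fiberwise fun v _ => mem_univ (φ v)
  have hequit : Set.EquitableOn ((univ : Finset (Fin k)) : Set (Fin k))
      fun j => #{v | φ v = j} := fun i j _ _ => hφ i j
  rcases (equitableOn_iff.1 hequit) i (mem_univ i) with h | h
  · left
    simpa [← hsum] using h
  · right
    have hclass : #{v | φ v = i} = Fintype.card V / k + 1 := by simpa [← hsum] using h
    -- All classes have at least `⌊n/k⌋` vertices and class `i` has one more, so `k ∤ n`.
    have hlt : k * (Fintype.card V / k) < Fintype.card V :=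
      calc k * (Fintype.card V / k) = ∑ _j : Fin k, Fintype.card V / k := by simp
        _ < ∑ j, #{v | φ v = j} :=
          sum_lt_sum (fun j _ => by have := hφ i j; omega) ⟨i, mem_univ i, by omega⟩
        _ = Fintype.card V := hsum.symm
    rw [hclass, ← Nat.ceilDiv_eq_add_pred_div]
    refine le_antisymm ?_ ?_
    · rwa [Nat.succ_le_iff, ← not_le, ceilDiv_le_iff_le_mul hk, not_le]
    · rw [ceilDiv_le_iff_le_mul hk]
      exact (Nat.lt_mul_div_succ _ hk).le

theorem exists_isEquitable_of_card_le [Fintype V] (G : SimpleGraph V) (hcard : Fintype.card V ≤ k) :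
    ∃ φ : V → Fin k, IsProperColoring G φ ∧ IsEquitable φ := by
  obtain ⟨φ⟩ : Nonempty (V ↪ Fin k) :=
    Function.Embedding.nonempty_of_card_le (by simpa using hcard)
  refine ⟨φ, fun u v hadj huv => hadj.ne (φ.injective huv),
    isEquitable_of_card_class_le_add_one fun i j => ?_⟩
  have hle : #{v | φ v = i} ≤ 1 := card_le_one.2 fun u hu v hv =>
    φ.injective ((mem_filter.1 hu).2.trans (mem_filter.1 hv).2.symm)
  exact hle.trans (Nat.le_add_left 1 _)

theorem IsProperColoring.exists_isNonadjMatching [Fintype V] (hφ : IsProperColoring G φ) :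
    ∃ f : {i // 1 < #{v | φ v = i}} → V × V, IsNonadjMatching G f := by
  have hpair (i : {i // 1 < #{v | φ v = i}}) :
      ∃ p : V × V, p.1 ≠ p.2 ∧ φ p.1 = i ∧ φ p.2 = i := by
    obtain ⟨u, hu, v, hv, huv⟩ := one_lt_card.1 i.2
    exact ⟨(u, v), huv, (mem_filter.1 hu).2, (mem_filter.1 hv).2⟩
  choose f hne hfst hsnd using hpair
  refine ⟨f, fun i => ⟨hne i, fun hadj => hφ _ _ hadj ((hfst i).trans (hsnd i).symm)⟩,
    fun i j hij => ?_⟩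
  have hdisj {u v : V} (hu : φ u = i) (hv : φ v = j) : u ≠ v := by
    rintro rfl
    exact hij (Subtype.ext (hu.symm.trans hv))
  exact ⟨hdisj (hfst i) (hfst j), hdisj (hfst i) (hsnd j), hdisj (hsnd i) (hfst j),
    hdisj (hsnd i) (hsnd j)⟩

namespace IsNonadjMatching

theorem comp_injective {κ : Type*} (hf : IsNonadjMatching G f) {g : κ → ι}
    (hg : Function.Injective g) : IsNonadjMatching G (f ∘ g) :=
  ⟨fun a => hf.1 (g a), fun a b hab => hf.2 (g a) (g b) (hg.ne hab)⟩

theorem injective_fst (hf : IsNonadjMatching G f) : Function.Injective fun a => (f a).1 :=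
  fun a b hab => by_contra fun hne => (hf.2 a b hne).1 hab

theorem injective_snd (hf : IsNonadjMatching G f) : Function.Injective fun a => (f a).2 :=
  fun a b hab => by_contra fun hne => (hf.2 a b hne).2.2.2 hab

theorem fst_ne_snd (hf : IsNonadjMatching G f) (a b : ι) : (f a).1 ≠ (f b).2 := by
  rcases eq_or_ne a b with rfl | hab
  · exact (hf.1 a).1
  · exact (hf.2 a b hab).2.1

variable [Fintype V] [Fintype ι]

theorem exists_isEquitable_of_card_eq (hf : IsNonadjMatching G f)
    (hcard : Fintype.card V = k + Fintype.card ι) :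
    ∃ φ : V → Fin k, IsProperColoring G φ ∧ IsEquitable φ := by
  -- The colors are the vertices that are not a second member of a pair; a second member gets the
  -- color of its partner.
  obtain ⟨e, he⟩ := exists_equiv_sum_of_injective (β := Fin k) hf.injective_snd
    (by simpa using hcard)
  have hfst (a : ι) : ∃ i, e (Sum.inl i) = (f a).1 := by
    obtain ⟨i | b, h⟩ := e.surjective (f a).1
    · exact ⟨i, h⟩
    · exact absurd (h.symm.trans (he b)) (hf.fst_ne_snd a b)
  choose s hs using hfst
  have hs_inj : Function.Injective s := fun a b hab =>
    hf.injective_fst (by simp only [← hs, hab])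
  refine ⟨fun v => Sum.elim id s (e.symm v), fun u v hadj huv => ?_,
    isEquitable_of_card_class_le_add_one fun i j => ?_⟩
  · obtain ⟨p, rfl⟩ := e.surjective u
    obtain ⟨q, rfl⟩ := e.surjective v
    simp only [Equiv.symm_apply_apply] at huv
    rcases p with i | a <;> rcases q with j | b <;>
      simp only [Sum.elim_inl, Sum.elim_inr, id_eq] at huv
    · exact hadj.ne (by rw [huv])
    · rw [huv, hs, he] at hadj
      exact (hf.1 b).2 hadj
    · rw [← huv, hs, he] at hadj
      exact (hf.1 a).2 hadj.symm
    · exact hadj.ne (by rw [hs_inj huv])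
  · have hfiber : #{a | s a = i} ≤ 1 := card_le_one.2 fun a ha b hb =>
      hs_inj ((mem_filter.1 ha).2.trans (mem_filter.1 hb).2.symm)
    rw [card_fiber_of_equiv_sum e (by simp) i, card_fiber_of_equiv_sum e (by simp) j]
    simp only [Equiv.symm_apply_apply, Sum.elim_inr]
    omega

theorem exists_isEquitable_of_card_le_add (hf : IsNonadjMatching G f)
    (hcard : Fintype.card V ≤ k + Fintype.card ι) :
    ∃ φ : V → Fin k, IsProperColoring G φ ∧ IsEquitable φ := by
  rcases le_total (Fintype.card V) k with hle | hge
  · exact exists_isEquitable_of_card_le G hle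
  · obtain ⟨g⟩ : Nonempty (Fin (Fintype.card V - k) ↪ ι) :=
      Function.Embedding.nonempty_of_card_le (by simpa [add_comm] using hcard)
    exact (hf.comp_injective g.injective).exists_isEquitable_of_card_eq (by simp [hge])

end IsNonadjMatching

end Coloring

theorem stmt3_general {V : Type*} [Fintype V] {G : SimpleGraph V} {U : Finset V} {k m : ℕ}
    (hclique : ∀ u v : V, u ∉ U → v ∉ U → u ≠ v → G.Adj u v)
    (hk : U.card ≤ k)
    (hm : IsGreatest {t : ℕ | ∃ f : Fin t → V × V, IsNonadjMatching G f} m) :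
    (∃ φ : V → Fin k, IsProperColoring G φ ∧ IsEquitable φ) ↔
    Fintype.card V ≤ k + m := by
  constructor
  · rintro ⟨φ, hproper, hequit⟩
    have hcard : Fintype.card V ≤ k * 2 := by
      have := hproper.card_le_card_add hclique
      omega
    obtain ⟨f, hf⟩ := hproper.exists_isNonadjMatching
    have hle := hm.2 ⟨_, hf.comp_injective (Fintype.equivFin _).symm.injective⟩
    have hcount := card_le_card_add_card_of_card_fiber_le_two
      (hequit.card_class_le_of_card_le_mul hcard)
    rw [Fintype.card_fin] at hcount
    exact hcount.trans (Nat.add_le_add_left hle k)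
  · obtain ⟨f, hf⟩ := hm.1
    exact fun hcard => hf.exists_isEquitable_of_card_le_add (by simpa using hcard)

/-- If `G − U` is a complete graph, `k > |U|`, and `m` is the maximum number of pairwise
disjoint non-adjacent pairs of vertices of `G` (i.e. the maximum size of a matching of the
complement graph), then `G` has an equitable `k`-coloring iff `n ≤ k + m`. -/
theorem stmt3 {V : Type*} [Fintype V] [DecidableEq V] (G : SimpleGraph V)
    (U : Finset V) (k m : ℕ)
    (hclique : ∀ u v : V, u ∉ U → v ∉ U → u ≠ v → G.Adj u v)
    (hk : U.card < k)
    (hm : IsGreatest {t : ℕ | ∃ f : Fin t → V × V,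
        (∀ a : Fin t, (f a).1 ≠ (f a).2 ∧ ¬ G.Adj (f a).1 (f a).2) ∧
        (∀ a b : Fin t, a ≠ b →
          (f a).1 ≠ (f b).1 ∧ (f a).1 ≠ (f b).2 ∧
          (f a).2 ≠ (f b).1 ∧ (f a).2 ≠ (f b).2)} m) :
    (∃ φ : V → Fin k, IsProperColoring G φ ∧ IsEquitable φ) ↔
    Fintype.card V ≤ k + m :=
  stmt3_general hclique hk.le hm
end

section
/- Let k ≥ 3, let G be a finite simple graph, and let P = {w_1, …, w_p} be a pendant path of G with p ≥ k + 2 vertices; set Q = V(G) \ P. Let φ be a proper k-coloring of the subgraph of G induced by Q that is α-balanced. Then φ can be extended to a proper k-coloring φ* of G (agreeing with φ on Q) that is α*-balanced for some α* ≤ α + 1; moreover, if α ≥ 1 then α* ≤ α (i.e., α* = α + 1 is possible only when α = 0). -/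
/-- `w` enumerates (injectively) a pendant path of `G`: the edges of `G` incident to the
vertices `w 0, …, w (p-1)` are exactly the consecutive path edges together with exactly one
edge from `w 0` to a vertex `u` outside the path and exactly one edge from `w (p-1)` to a
vertex `v` outside the path. -/
def IsPendantPath {V : Type*} {p : ℕ} (G : SimpleGraph V) (w : Fin p → V) : Prop :=
  Function.Injective w ∧
  ∃ u v : V, u ∉ Set.range w ∧ v ∉ Set.range w ∧
    ∀ (i : Fin p) (b : V),
      G.Adj (w i) b ↔
        ((∃ j : Fin p, b = w j ∧ (i.val + 1 = j.val ∨ j.val + 1 = i.val)) ∨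
          (i.val = 0 ∧ b = u) ∨ (i.val = p - 1 ∧ b = v))

/-- The balance of the `k`-coloring `φ` on the vertex set `S`: the difference between the
largest and the smallest size of a color class within `S`. -/
def balanceOn {V : Type*} {k : ℕ} (S : Finset V) (φ : V → Fin k) : ℕ :=
  Finset.univ.sup fun ij : Fin k × Fin k =>
    (S.filter fun v => φ v = ij.1).card - (S.filter fun v => φ v = ij.2).card

/-!
Over any block that lists each of the `k` colors once, all color classes grow equally. So the
coloring of the path starts with such a block, and only the remaining `p - k ≥ 2` vertices matter.
Cut further such blocks off the remainder until it has between `2` and `k + 1` vertices. If it has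
at most `k`, color it with distinct colors taken from the smallest classes; if it has `k + 1`, color
it with a smallest class followed by one more full block. Either way the smallest classes are the
only ones to gain an extra vertex, which never pushes a balance of at least `1` further up. Three
colors suffice to avoid the color before and the color after a full block, and two distinct colors
suffice for the remainder to avoid the color that follows it.
-/

/-- Any two of the values of `n` differ by at most `M`; for the color class sizes `n` of a coloring,
this says that its balance is at most `M`. Written additively to avoid truncated subtraction. -/
def BalancedWithin {C : Type*} (M : ℕ) (n : C → ℕ) : Prop :=
  ∀ i j, n i ≤ n j + M

namespace BalancedWithin

variable {C : Type*} {M : ℕ} {n : C → ℕ}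

theorem add_const (h : BalancedWithin M n) (a : ℕ) : BalancedWithin M fun c => n c + a := by
  intro i j
  have := h i j
  dsimp only
  omega

theorem add_indicator_of_forall_le [DecidableEq C] (h : BalancedWithin M n) (hM : 1 ≤ M)
    {T : Finset C} (hT : ∀ i ∈ T, ∀ j ∉ T, n i ≤ n j) :
    BalancedWithin M fun c => n c + if c ∈ T then 1 else 0 := by
  intro i j
  have := h i j
  have := hT i
  grind

end BalancedWithin

theorem balanceOn_le_iff {V : Type*} {k : ℕ} {S : Finset V} {φ : V → Fin k} {M : ℕ} :
    balanceOn S φ ≤ M ↔ BalancedWithin M fun c => (S.filter fun v => φ v = c).card := by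
  simp only [balanceOn, BalancedWithin, Finset.sup_le_iff, Finset.mem_univ, true_imp_iff,
    Prod.forall, tsub_le_iff_left]

theorem exists_finset_card_eq_forall_le {ι α : Type*} [Fintype ι] [LinearOrder α] (f : ι → α)
    {r : ℕ} (hr : r ≤ Fintype.card ι) :
    ∃ T : Finset ι, T.card = r ∧ ∀ i ∈ T, ∀ j ∉ T, f i ≤ f j := by
  classical
  induction r with
  | zero => exact ⟨∅, by simp⟩
  | succ r ih =>
    obtain ⟨T, hT, hle⟩ := ih (by omega)
    have hne : Tᶜ.Nonempty := by
      rw [← Finset.card_pos, Finset.card_compl]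
      omega
    obtain ⟨x, hx, hmin⟩ := Finset.exists_min_image Tᶜ f hne
    simp only [Finset.mem_compl] at hx hmin
    refine ⟨insert x T, by rw [Finset.card_insert_of_notMem hx, hT], fun i hi j hj => ?_⟩
    obtain ⟨-, hjT⟩ : j ≠ x ∧ j ∉ T := by simpa only [Finset.mem_insert, not_or] using hj
    rcases Finset.mem_insert.1 hi with rfl | hi
    · exact hmin j hjT
    · exact hle i hi j hjT

section Lists

variable {C : Type*}

theorem isChain_cons_append_singleton_iff {R : C → C → Prop} {a b : C} {l : List C} (hl : l ≠ []) :
    (a :: (l ++ [b])).IsChain R ↔ R a (l.head hl) ∧ l.IsChain R ∧ R (l.getLast hl) b := by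
  simp [List.isChain_cons, List.isChain_append, List.head?_append, List.head?_eq_some_head hl,
    List.getLast?_eq_some_getLast hl]

variable [DecidableEq C]

theorem exists_nodup_isChain_ne_append_singleton {T : Finset C} (hT : 2 ≤ T.card) (b : C) :
    ∃ l : List C, l.Nodup ∧ l.toFinset = T ∧ (l ++ [b]).IsChain (· ≠ ·) := by
  obtain ⟨x, hx, hxb⟩ : ∃ x ∈ T, x ≠ b := Finset.exists_mem_ne (by omega) b
  have hnodup : ((T.erase x).toList ++ [x]).Nodup := by
    simp [← List.concat_eq_append, List.nodup_concat, Finset.nodup_toList]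
  refine ⟨(T.erase x).toList ++ [x], hnodup, ?_, ?_⟩
  · simp [Finset.union_singleton, Finset.insert_erase hx]
  · exact List.isChain_append.2 ⟨hnodup.isChain, by simp, by simpa using hxb⟩

theorem exists_nodup_isChain_ne_cons_append_singleton {T : Finset C} (hT : 3 ≤ T.card) (a b : C) :
    ∃ l : List C, l.Nodup ∧ l.toFinset = T ∧ (a :: (l ++ [b])).IsChain (· ≠ ·) := by
  obtain ⟨x, hx, hxa⟩ : ∃ x ∈ T, x ≠ a := Finset.exists_mem_ne (by omega) a
  have hcard : 2 ≤ (T.erase x).card := by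
    rw [Finset.card_erase_of_mem hx]
    omega
  obtain ⟨l, hnodup, hl, hchain⟩ := exists_nodup_isChain_ne_append_singleton hcard b
  have hxl : x ∉ l := by simp [← List.mem_toFinset, hl]
  have hne : l ≠ [] := by
    rintro rfl
    simp [← hl] at hcard
  have hhead : x ≠ l.head hne := fun h => hxl (h ▸ List.head_mem hne)
  refine ⟨x :: l, List.nodup_cons.2 ⟨hxl, hnodup⟩, ?_, ?_⟩
  · rw [List.toFinset_cons, hl, Finset.insert_erase hx]
  · simp [List.isChain_cons, hchain, hxa.symm, List.head?_append, List.head?_eq_some_head hne,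
      hhead]

variable [Fintype C]

theorem exists_count_eq_one_isChain_ne (hC : 3 ≤ Fintype.card C) (a b : C) :
    ∃ l : List C, l.length = Fintype.card C ∧ (∀ c, l.count c = 1) ∧
      (a :: (l ++ [b])).IsChain (· ≠ ·) := by
  obtain ⟨l, hnodup, hl, hchain⟩ :=
    exists_nodup_isChain_ne_cons_append_singleton (T := Finset.univ) hC a b
  refine ⟨l, ?_, fun c => ?_, hchain⟩
  · rw [← List.toFinset_card_of_nodup hnodup, hl, Finset.card_univ]
  · exact List.count_eq_one_of_mem hnodup (by simp [← List.mem_toFinset, hl])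

theorem exists_isChain_ne_count_eq_add_one (hC : 3 ≤ Fintype.card C) {m : List C} {b : C}
    (hne : m ≠ []) (hm : (m ++ [b]).IsChain (· ≠ ·)) (a : C) :
    ∃ l : List C, l.length = m.length + Fintype.card C ∧ (∀ c, l.count c = m.count c + 1) ∧
      (a :: (l ++ [b])).IsChain (· ≠ ·) := by
  obtain ⟨s, m, rfl⟩ := List.exists_cons_of_ne_nil hne
  obtain ⟨e, hlength, hcount, he⟩ := exists_count_eq_one_isChain_ne hC a s
  refine ⟨e ++ s :: m, by rw [List.length_append, hlength, add_comm], fun c => ?_, ?_⟩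
  · rw [List.count_append, hcount, add_comm]
  · have := List.IsChain.append_overlap (l₁ := a :: e) (l₂ := [s]) he hm (by simp)
    simpa using this

end Lists

section PathColorings

variable {C : Type*} [Fintype C] [DecidableEq C] {M : ℕ} {n : C → ℕ}

theorem exists_balanced_isChain_ne_of_le_card (hM : 1 ≤ M) (hn : BalancedWithin M n) (b : C)
    {r : ℕ} (hr : 2 ≤ r) (hrC : r ≤ Fintype.card C) :
    ∃ l : List C, l.length = r ∧ (l ++ [b]).IsChain (· ≠ ·) ∧
      BalancedWithin M fun c => n c + l.count c := by
  obtain ⟨T, rfl, hT⟩ := exists_finset_card_eq_forall_le n hrC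
  obtain ⟨l, hnodup, rfl, hchain⟩ := exists_nodup_isChain_ne_append_singleton hr b
  refine ⟨l, (List.toFinset_card_of_nodup hnodup).symm, hchain, ?_⟩
  simpa only [hnodup.count, List.mem_toFinset] using hn.add_indicator_of_forall_le hM hT

theorem exists_balanced_isChain_ne_card_add_one (hC : 3 ≤ Fintype.card C) (hM : 1 ≤ M)
    (hn : BalancedWithin M n) (b : C) :
    ∃ l : List C, l.length = Fintype.card C + 1 ∧ (l ++ [b]).IsChain (· ≠ ·) ∧
      BalancedWithin M fun c => n c + l.count c := by
  obtain ⟨t, -, ht⟩ := Finset.exists_min_image Finset.univ n ⟨b, Finset.mem_univ b⟩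
  have hbal : BalancedWithin M fun c => n c + if c ∈ ({t} : Finset C) then 1 else 0 :=
    hn.add_indicator_of_forall_le hM fun i hi j _ =>
      Finset.mem_singleton.1 hi ▸ ht j (Finset.mem_univ j)
  obtain ⟨e, hlength, hcount, hchain⟩ := exists_count_eq_one_isChain_ne hC t b
  refine ⟨t :: e, by rw [List.length_cons, hlength], hchain, ?_⟩
  convert hbal.add_const 1 using 2 with c
  simp only [List.count_cons, hcount, Finset.mem_singleton, beq_iff_eq, eq_comm (a := t)]
  ring

theorem exists_balanced_isChain_ne_append_singleton (hC : 3 ≤ Fintype.card C) (hM : 1 ≤ M)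
    (hn : BalancedWithin M n) (b : C) {r : ℕ} (hr : 2 ≤ r) :
    ∃ l : List C, l.length = r ∧ (l ++ [b]).IsChain (· ≠ ·) ∧
      BalancedWithin M fun c => n c + l.count c := by
  induction r using Nat.strong_induction_on with
  | _ r ih =>
  rcases lt_trichotomy r (Fintype.card C + 1) with hlt | rfl | hgt
  · exact exists_balanced_isChain_ne_of_le_card hM hn b hr (by omega)
  · exact exists_balanced_isChain_ne_card_add_one hC hM hn b
  · obtain ⟨m, hlength, hm, hbal⟩ := ih (r - Fintype.card C) (by omega) (by omega)
    have hne : m ≠ [] := List.ne_nil_of_length_pos (by omega)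
    obtain ⟨l, hlength', hcount, hl⟩ := exists_isChain_ne_count_eq_add_one hC hne hm b
    refine ⟨l, by omega, hl.tail, ?_⟩
    simpa only [hcount, add_assoc] using hbal.add_const 1

theorem exists_balanced_isChain_ne_cons_append_singleton (hC : 3 ≤ Fintype.card C) (hM : 1 ≤ M)
    (hn : BalancedWithin M n) (a b : C) {p : ℕ} (hp : Fintype.card C + 2 ≤ p) :
    ∃ l : List C, l.length = p ∧ (a :: (l ++ [b])).IsChain (· ≠ ·) ∧
      BalancedWithin M fun c => n c + l.count c := by
  obtain ⟨m, hlength, hm, hbal⟩ :=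
    exists_balanced_isChain_ne_append_singleton hC hM hn b (r := p - Fintype.card C) (by omega)
  have hne : m ≠ [] := List.ne_nil_of_length_pos (by omega)
  obtain ⟨l, hlength', hcount, hl⟩ := exists_isChain_ne_count_eq_add_one hC hne hm a
  refine ⟨l, by omega, hl, ?_⟩
  simpa only [hcount, add_assoc] using hbal.add_const 1

end PathColorings

theorem card_filter_extend_eq {ι V C : Type*} [Fintype ι] [Fintype V] [DecidableEq V]
    [DecidableEq C] {w : ι → V} (hw : Function.Injective w) (f : ι → C) (φ : V → C) (c : C) :
    (Finset.univ.filter fun x => Function.extend w f φ x = c).card =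
      ((Finset.univ \ Finset.univ.image w).filter fun x => φ x = c).card +
        (Finset.univ.filter fun i => f i = c).card := by
  have hin : ((Finset.univ.image w).filter fun x => Function.extend w f φ x = c).card =
      (Finset.univ.filter fun i => f i = c).card := by
    simp only [Finset.filter_image, Finset.card_image_of_injective _ hw, hw.extend_apply]
  have hout : ((Finset.univ \ Finset.univ.image w).filter fun x => Function.extend w f φ x = c) =
      (Finset.univ \ Finset.univ.image w).filter fun x => φ x = c := by
    refine Finset.filter_congr fun x hx => ?_
    rw [Function.extend_apply' _ _ _ (by simpa using hx)]
  rw [← hout, ← hin, ← Finset.card_union_of_disjoint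
    (Finset.disjoint_filter_filter Finset.sdiff_disjoint), ← Finset.filter_union,
    Finset.sdiff_union_of_subset (Finset.subset_univ _)]

theorem isProperColoring_of_forall_mem {V : Type*} {k : ℕ} {G : SimpleGraph V} {ψ : V → Fin k}
    (s : Set V) (hs : ∀ x ∈ s, ∀ y, G.Adj x y → ψ x ≠ ψ y)
    (hsc : ∀ x y, x ∉ s → y ∉ s → G.Adj x y → ψ x ≠ ψ y) : IsProperColoring G ψ := by
  intro x y hxy
  by_cases hx : x ∈ s
  · exact hs x hx y hxy
  by_cases hy : y ∈ s
  · exact (hs y hy x hxy.symm).symm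
  exact hsc x y hx hy hxy

theorem isProperColoring_extend_of_isChain {V : Type*} {k : ℕ} {G : SimpleGraph V}
    {φ : V → Fin k} {l : List (Fin k)} {w : Fin l.length → V} (hw : Function.Injective w) {u v : V}
    (hu : u ∉ Set.range w) (hv : v ∉ Set.range w)
    (hadj : ∀ i x, G.Adj (w i) x →
      (∃ j, x = w j ∧ (i.val + 1 = j.val ∨ j.val + 1 = i.val)) ∨
        (i.val = 0 ∧ x = u) ∨ (i.val = l.length - 1 ∧ x = v))
    (hφ : ∀ x y, x ∉ Set.range w → y ∉ Set.range w → G.Adj x y → φ x ≠ φ y)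
    (hl : (φ u :: (l ++ [φ v])).IsChain (· ≠ ·)) :
    IsProperColoring G (Function.extend w l.get φ) := by
  have hout : ∀ x ∉ Set.range w, Function.extend w l.get φ x = φ x := fun x hx =>
    Function.extend_apply' _ _ _ hx
  refine isProperColoring_of_forall_mem (Set.range w) ?_ fun x y hx hy hxy => ?_
  · rintro _ ⟨i, rfl⟩ x hx
    have hne : l ≠ [] := List.ne_nil_of_length_pos i.pos
    obtain ⟨hfirst, hchain, hlast⟩ := (isChain_cons_append_singleton_iff hne).1 hl
    have hstep : ∀ i j : Fin l.length, i.val + 1 = j.val → l.get i ≠ l.get j := by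
      rintro i ⟨_, hj⟩ rfl
      exact List.isChain_iff_getElem.1 hchain i hj
    rw [hw.extend_apply]
    rcases hadj i x hx with ⟨j, rfl, hij | hji⟩ | ⟨hi, rfl⟩ | ⟨hi, rfl⟩
    · rw [hw.extend_apply]
      exact hstep i j hij
    · rw [hw.extend_apply]
      exact (hstep j i hji).symm
    · simpa [hout _ hu, hi, List.head_eq_getElem] using hfirst.symm
    · simpa [hout _ hv, hi, List.getLast_eq_getElem] using hlast
  · rw [hout x hx, hout y hy]
    exact hφ x y hx hy hxy

/-- Extending an `α`-balanced proper `k`-coloring of `G − P` along a pendant path `P` with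
at least `k + 2` vertices, obtaining an `α*`-balanced proper coloring of `G` with
`α* ≤ α + 1`, and `α* ≤ α` whenever `α ≥ 1`. -/
theorem stmt4 {V : Type*} [Fintype V] [DecidableEq V] (G : SimpleGraph V)
    (k p : ℕ) (hk : 3 ≤ k) (hp : k + 2 ≤ p)
    (w : Fin p → V) (hw : IsPendantPath G w)
    (φ : V → Fin k) (α : ℕ)
    (hproper : ∀ a b : V, a ∉ Set.range w → b ∉ Set.range w → G.Adj a b → φ a ≠ φ b)
    (hbal : balanceOn (Finset.univ \ Finset.univ.image w) φ = α) :
    ∃ (ψ : V → Fin k) (α' : ℕ),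
      (∀ v : V, v ∉ Set.range w → ψ v = φ v) ∧
      IsProperColoring G ψ ∧
      balanceOn Finset.univ ψ = α' ∧
      α' ≤ α + 1 ∧ (1 ≤ α → α' ≤ α) := by
  obtain ⟨hinj, u, v, hu, hv, hadj⟩ := hw
  have hn := balanceOn_le_iff.1 (hbal.le.trans (le_max_left α 1))
  obtain ⟨l, rfl, hchain, hl⟩ := exists_balanced_isChain_ne_cons_append_singleton
    (by simpa using hk) (le_max_right α 1) hn (φ u) (φ v) (by simpa using hp)
  have hψ : balanceOn Finset.univ (Function.extend w l.get φ) ≤ max α 1 := by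
    have hcount : ∀ c, (Finset.univ.filter fun i => l.get i = c).card = l.count c := fun c =>
      Fin.card_filter_univ_eq_vector_get_eq_count c ⟨l, rfl⟩
    simpa only [balanceOn_le_iff, card_filter_extend_eq hinj, hcount] using hl
  exact ⟨Function.extend w l.get φ, _, fun x hx => Function.extend_apply' _ _ _ hx,
    isProperColoring_extend_of_isChain hinj hu hv (fun i x => (hadj i x).1) hproper hchain,
    rfl, by omega, by omega⟩
end

section
/- Let k ≥ 3 and let G be a finite simple graph containing pairwise disjoint pendant paths P_1, …, P_r, each P_i having p_i ≥ 2k + 3 vertices, where p_i = k + 2 + c_i + x_i(k + 1) with integers x_i ≥ 1 and 0 ≤ c_i ≤ k, and such that for each i the two neighbors outside P_i of the endpoints of P_i lie in Q = V(G) \ (P_1 ∪ ⋯ ∪ P_r). If x_1 + ⋯ + x_r ≥ |Q|, then G admits an equitable k-coloring if and only if the subgraph of G induced by Q admits a proper k-coloring. -/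
/-!
A proper coloring of `Q` is extended to `G` with prescribed class sizes. Fix the sizes of an
equitable coloring; each of them is at least `|Q|`, so the coloring of `Q` leaves a multiset of
colors to be spent on the paths. A path on `p` vertices can be colored with a given multiset of `p`
colors, whatever the colors of the two outside neighbors, as soon as no color occurs more than
`h = ⌊(p - 1) / 2⌋` times: going along the path, use next the one color that threatens to become too
frequent, if there is such a color. Because `2h ≤ p ≤ 3h` once `p ≥ 5`, the colors can be split
among the paths within these caps whenever each color occurs at most `∑ h` times in total, and this
is what `|Q| ≤ x_1 + ⋯ + x_r` guarantees.
-/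

section Distribution

theorem exists_between_card_eq {α : Type*} {L U : Multiset α} {m : ℕ} (hLU : L ≤ U)
    (hL : L.card ≤ m) (hU : m ≤ U.card) : ∃ M, L ≤ M ∧ M ≤ U ∧ M.card = m := by
  obtain ⟨D, rfl⟩ := Multiset.le_iff_exists_add.1 hLU
  rw [Multiset.card_add] at hU
  obtain ⟨T, hT⟩ : ∃ T, T ∈ D.powersetCard (m - L.card) := by
    rw [← Multiset.card_pos_iff_exists_mem, Multiset.card_powersetCard]
    exact Nat.choose_pos (by lia)
  obtain ⟨hTD, hTcard⟩ := Multiset.mem_powersetCard.1 hT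
  exact ⟨L + T, le_self_add, by gcongr, by rw [Multiset.card_add]; lia⟩

variable {α : Type*} [DecidableEq α]

/-- The excess of the multiset `D` over the cap `m`: what is left of `D` after the removal of
`m` copies of each element (all copies, where there are fewer than `m`). A part of `D` whose
complement has multiplicities at most `m` has to contain it. -/
def excess (D : Multiset α) (m : ℕ) : Multiset α := D - m • D.dedup

theorem count_excess (D : Multiset α) (m : ℕ) (j : α) :
    (excess D m).count j = D.count j - m := by
  by_cases hj : j ∈ D <;> simp [excess, hj]

theorem excess_add_nsmul_dedup_le (D : Multiset α) (m : ℕ) :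
    excess D m + m • (excess D m).dedup ≤ D := by
  refine Multiset.le_iff_count.2 fun j => ?_
  have hj := count_excess D m j
  have hmem := Multiset.one_le_count_iff_mem (a := j) (s := excess D m)
  rw [Multiset.count_add, Multiset.count_nsmul, Multiset.count_dedup]
  split_ifs <;> lia

-- At most two elements exceed `H`, each by at most `h`, or the cap removes at least `3 * H`.
theorem card_excess_le {D : Multiset α} {p P h H : ℕ} (hcard : D.card = p + P)
    (hcount : ∀ j, D.count j ≤ h + H) (hp : 2 * h ≤ p) (hP : P ≤ 3 * H) :
    (excess D H).card ≤ p := by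
  rcases le_or_gt (excess D H).toFinset.card 2 with hfew | hmany
  · calc (excess D H).card = ∑ j ∈ (excess D H).toFinset, (excess D H).count j :=
          (Multiset.toFinset_sum_count_eq _).symm
      _ ≤ (excess D H).toFinset.card * h := Finset.sum_le_card_nsmul _ _ _ fun j _ => by
          rw [count_excess]; exact tsub_le_iff_right.2 (hcount j)
      _ ≤ 2 * h := by gcongr
      _ ≤ p := hp
  · have hle := Multiset.card_le_card (excess_add_nsmul_dedup_le D H)
    rw [Multiset.card_add, Multiset.card_nsmul, ← Multiset.card_toFinset, hcard] at hle
    have hthree : H * 3 ≤ H * (excess D H).toFinset.card := by gcongr; exact hmany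
    lia

-- `M` must contain `excess D H` and avoid `excess D h`; the two cardinality conditions this
-- imposes are exchanged by swapping the roles of `M` and `D - M`.
theorem exists_le_card_eq_of_count_le {D : Multiset α} {p P h H : ℕ} (hcard : D.card = p + P)
    (hcount : ∀ j, D.count j ≤ h + H) (hp : 2 * h ≤ p) (hp' : p ≤ 3 * h) (hP : 2 * H ≤ P)
    (hP' : P ≤ 3 * H) :
    ∃ M ≤ D, M.card = p ∧ (∀ j, M.count j ≤ h) ∧ ∀ j, (D - M).count j ≤ H := by
  have hlower : (excess D H).card ≤ p := card_excess_le hcard hcount hp hP'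
  have hupper : (excess D h).card ≤ P :=
    card_excess_le (by rw [hcard, add_comm]) (fun j => by rw [add_comm]; exact hcount j) hP hp'
  have hle : excess D H ≤ D - excess D h := Multiset.le_iff_count.2 fun j => by
    have hj := hcount j
    rw [Multiset.count_sub, count_excess, count_excess]
    lia
  obtain ⟨M, hlM, hMu, hM⟩ := exists_between_card_eq hle hlower
    (by rw [Multiset.card_sub (show excess D h ≤ D from tsub_le_self)]; lia)
  refine ⟨M, hMu.trans tsub_le_self, hM, fun j => ?_, fun j => ?_⟩
  · have hj := Multiset.count_le_of_le j hMu
    rw [Multiset.count_sub, count_excess] at hj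
    lia
  · have hj := Multiset.count_le_of_le j hlM
    rw [count_excess] at hj
    rw [Multiset.count_sub]
    lia

theorem exists_sum_eq_of_count_le {ι : Type*} {s : Finset ι} {p h : ι → ℕ}
    (hlow : ∀ i ∈ s, 2 * h i ≤ p i) (hhigh : ∀ i ∈ s, p i ≤ 3 * h i) {D : Multiset α}
    (hcard : D.card = ∑ i ∈ s, p i) (hcount : ∀ j, D.count j ≤ ∑ i ∈ s, h i) :
    ∃ M : ι → Multiset α, ∑ i ∈ s, M i = D ∧
      ∀ i ∈ s, (M i).card = p i ∧ ∀ j, (M i).count j ≤ h i := by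
  classical
  induction s using Finset.induction_on generalizing D with
  | empty => exact ⟨0, by simp_all⟩
  | insert e s he ih =>
    simp only [Finset.sum_insert he] at hcard hcount
    simp only [Finset.forall_mem_insert] at hlow hhigh
    obtain ⟨Me, hMeD, hMecard, hMe, hrest⟩ := exists_le_card_eq_of_count_le hcard hcount
      hlow.1 hhigh.1 (by rw [Finset.mul_sum]; exact Finset.sum_le_sum hlow.2)
      (by rw [Finset.mul_sum]; exact Finset.sum_le_sum hhigh.2)
    obtain ⟨M, hsum, hM⟩ := ih hlow.2 hhigh.2 (by rw [Multiset.card_sub hMeD]; lia) hrest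
    refine ⟨Function.update M e Me, ?_, ?_⟩
    · rw [Finset.sum_insert he, Finset.sum_update_of_notMem he, hsum, Function.update_self,
        add_tsub_cancel_of_le hMeD]
    · refine (Finset.forall_mem_insert ..).2 ⟨by simpa using ⟨hMecard, hMe⟩, fun i hi => ?_⟩
      rw [Function.update_of_ne (ne_of_mem_of_not_mem hi he)]
      exact hM i hi

end Distribution

section PathColoring

variable {α : Type*} [DecidableEq α]

theorem count_add_count_le_card (s : Multiset α) {i j : α} (hij : i ≠ j) :
    s.count i + s.count j ≤ s.card := by
  have hle : Multiset.replicate (s.count i) i ≤ s := Multiset.le_count_iff_replicate_le.1 le_rfl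
  have hrest := Multiset.count_le_card j (s - Multiset.replicate (s.count i) i)
  have hi := Multiset.count_le_card i s
  rw [Multiset.count_sub, Multiset.count_replicate, if_neg hij, Multiset.card_sub hle,
    Multiset.card_replicate] at hrest
  lia

-- Two colors cannot both be critical, since together they occur at most `s.card` times.
theorem exists_ne_mem_forall_count_le {s : Multiset α} {a b : α} (hs : s ≠ 0)
    (ha : 2 * s.count a ≤ s.card) :
    ∃ c ∈ s, c ≠ a ∧ ∀ j, j ≠ a → j ≠ c → 2 * s.count j + Multiset.count j {b} ≤ s.card := by
  have hcard := Multiset.card_pos.2 hs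
  by_cases hcritical : ∃ c, c ≠ a ∧ s.card < 2 * s.count c + Multiset.count c {b}
  · obtain ⟨c, hca, hc⟩ := hcritical
    have hcb := Multiset.count_le_card c {b}
    rw [Multiset.card_singleton] at hcb
    refine ⟨c, Multiset.one_le_count_iff_mem.1 (by lia), hca, fun j _ hjc => ?_⟩
    have hpair := count_add_count_le_card s hjc
    have hpairb := count_add_count_le_card {b} hjc
    rw [Multiset.card_singleton] at hpairb
    lia
  · push Not at hcritical
    obtain ⟨c, hcs, hca⟩ : ∃ c ∈ s, c ≠ a := by
      by_contra! hall
      have hcount : s.count a = s.card := Multiset.count_eq_card.2 fun j hj => (hall j hj).symm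
      lia
    exact ⟨c, hcs, hca, fun j hja _ => hcritical j hja⟩

theorem exists_ne_mem_count_erase_le {s : Multiset α} {a b : α} (hs : s ≠ 0)
    (h : ∀ j, 2 * s.count j + Multiset.count j {a, b} ≤ s.card + 1) :
    ∃ c ∈ s, c ≠ a ∧ ∀ j, 2 * (s.erase c).count j + Multiset.count j {c, b} ≤ s.card := by
  simp only [Multiset.insert_eq_cons] at h ⊢
  have ha := h a
  rw [Multiset.count_cons_self] at ha
  obtain ⟨c, hcs, hca, hc⟩ := exists_ne_mem_forall_count_le (a := a) (b := b) hs (by lia)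
  refine ⟨c, hcs, hca, fun j => ?_⟩
  have hj := h j
  obtain rfl | hjc := eq_or_ne j c
  · have hpos := Multiset.one_le_count_iff_mem.2 hcs
    rw [Multiset.count_cons_of_ne hca] at hj
    rw [Multiset.count_cons_self, Multiset.count_erase_self]
    lia
  · rw [Multiset.count_cons_of_ne hjc, Multiset.count_erase_of_ne hjc]
    obtain rfl | hja := eq_or_ne j a
    · lia
    · exact hc j hja hjc

theorem exists_isChain_ne {s : Multiset α} {a b : α}
    (h : ∀ j, 2 * s.count j + Multiset.count j {a, b} ≤ s.card + 1) :
    ∃ l : List α, (l : Multiset α) = s ∧ (a :: (l ++ [b])).IsChain (· ≠ ·) := by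
  induction hn : s.card generalizing s a with
  | zero =>
    obtain rfl := Multiset.card_eq_zero.1 hn
    have hab : a ≠ b := by
      rintro rfl
      simpa using h a
    exact ⟨[], rfl, by simpa using hab⟩
  | succ n ih =>
    obtain ⟨c, hcs, hca, hc⟩ := exists_ne_mem_count_erase_le (by rintro rfl; simp at hn) h
    have hcard : (s.erase c).card = n := by rw [Multiset.card_erase_of_mem hcs, hn, Nat.pred_succ]
    obtain ⟨l, hl, hchain⟩ := ih (by rw [hcard, ← hn]; exact hc) hcard
    refine ⟨c :: l, ?_, hchain.cons_cons hca.symm⟩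
    rw [← Multiset.cons_coe, hl, Multiset.cons_erase hcs]

theorem exists_path_coloring {p : ℕ} {s : Multiset α} {a b : α} (hs : s.card = p)
    (h : ∀ j, 2 * s.count j + Multiset.count j {a, b} ≤ p + 1) :
    ∃ f : Fin p → α, Finset.univ.val.map f = s ∧
      (∀ i j : Fin p, i.val + 1 = j.val → f i ≠ f j) ∧
      (∀ i : Fin p, i.val = 0 → f i ≠ a) ∧ ∀ i : Fin p, i.val + 1 = p → f i ≠ b := by
  rw [← hs] at h
  obtain ⟨l, rfl, hl⟩ := exists_isChain_ne h
  rw [Multiset.coe_card] at hs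
  subst hs
  have hfirst : (a :: l).IsChain (· ≠ ·) := List.IsChain.left_of_append (l₂ := [b]) hl
  obtain ⟨hmid, -, hlast⟩ := List.isChain_append.1 hl.tail
  rw [List.isChain_iff_getElem] at hfirst hmid
  refine ⟨l.get, ?_, fun i j hij => ?_, fun i hi => ?_, fun i hi => ?_⟩
  · rw [Fin.univ_val_map, List.ofFn_get]
  · obtain ⟨j, hj⟩ := j
    obtain rfl : i + 1 = j := hij
    exact hmid i hj
  · obtain ⟨i, hlt⟩ := i
    obtain rfl : i = 0 := hi
    exact (hfirst 0 (by simpa using hlt)).symm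
  · refine hlast (l.get i) ?_ b rfl
    rw [List.getLast?_eq_getElem?, ← hi]
    simp

theorem IsPendantPath.exists_coloring {V : Type*} {G : SimpleGraph V} {p : ℕ} {w : Fin p → V}
    (hw : IsPendantPath G w) (ψ : V → α) {s : Multiset α} (hs : s.card = p)
    (hcount : ∀ j, 2 * s.count j < p) :
    ∃ f : Fin p → α, Finset.univ.val.map f = s ∧ (∀ i j, G.Adj (w i) (w j) → f i ≠ f j) ∧
      ∀ i, ∀ b ∉ Set.range w, G.Adj (w i) b → f i ≠ ψ b := by
  obtain ⟨hinj, u, v, hu, hv, hadj⟩ := hw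
  have hends : ∀ j, 2 * s.count j + Multiset.count j {ψ u, ψ v} ≤ p + 1 := fun j => by
    have hj := hcount j
    have huv := Multiset.count_le_card j {ψ u, ψ v}
    rw [Multiset.card_pair] at huv
    lia
  obtain ⟨f, hf, hstep, hfirst, hlast⟩ := exists_path_coloring hs hends
  refine ⟨f, hf, fun i j hij => ?_, fun i b hb hib => ?_⟩
  · rcases (hadj i (w j)).1 hij with ⟨j', hj', hnext | hprev⟩ | ⟨-, rfl⟩ | ⟨-, rfl⟩
    · exact hstep i j (hinj hj' ▸ hnext)
    · exact (hstep j i (hinj hj' ▸ hprev)).symm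
    · exact absurd ⟨j, rfl⟩ hu
    · exact absurd ⟨j, rfl⟩ hv
  · rcases (hadj i b).1 hib with ⟨j, rfl, -⟩ | ⟨hi, rfl⟩ | ⟨hi, rfl⟩
    · exact absurd ⟨j, rfl⟩ hb
    · exact hfirst i hi
    · exact hlast i (by have := i.isLt; lia)

end PathColoring

section Equitable

theorem isEquitable_iff_count {V : Type*} [Fintype V] {k : ℕ} {φ : V → Fin k} :
    IsEquitable φ ↔ ∀ i, (Finset.univ.val.map φ).count i = Fintype.card V / k ∨
      (Finset.univ.val.map φ).count i = (Fintype.card V + k - 1) / k := by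
  simp only [IsEquitable, Multiset.count_map, Finset.card_def, Finset.filter_val,
    eq_comm (a := φ _)]

theorem div_add_one_eq_of_mod_pos {n k : ℕ} (hk : 0 < k) (hn : 0 < n % k) :
    n / k + 1 = (n + k - 1) / k := by
  have hdiv := Nat.div_add_mod n k
  apply le_antisymm
  · rw [Nat.le_div_iff_mul_le hk, add_one_mul, mul_comm]
    lia
  · rw [← Nat.add_div_right n hk]
    exact Nat.div_le_div_right (Nat.sub_le ..)

theorem exists_multiset_count_eq_div (n : ℕ) {k : ℕ} (hk : 0 < k) :
    ∃ T : Multiset (Fin k), T.card = n ∧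
      ∀ i, T.count i = n / k ∨ T.count i = (n + k - 1) / k := by
  let residue (m : ℕ) : Fin k := ⟨m % k, Nat.mod_lt m hk⟩
  refine ⟨(Multiset.range n).map residue, by simp, fun i => ?_⟩
  have hcount : ((Multiset.range n).map residue).count i = Nat.count (· ≡ i [MOD k]) n := by
    rw [Nat.count_eq_card_filter_range, Multiset.count_map, Finset.card_def, Finset.filter_val,
      Finset.range_val]
    congr! 3 with m
    rw [Fin.ext_iff, eq_comm, Nat.ModEq, Nat.mod_eq_of_lt i.isLt]
  rw [hcount, Nat.count_modEq_card n hk]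
  split_ifs with hi
  · exact Or.inr (div_add_one_eq_of_mod_pos hk (Nat.zero_lt_of_lt hi))
  · exact Or.inl rfl

end Equitable

/-- The vertex sequences `w i` enumerate pairwise disjoint pendant paths of `G`, and `Q` is the set
of vertices on none of them; every edge leaving one of the paths ends in `Q`. -/
structure IsPendantPathSystem {V ι : Type*} {p : ι → ℕ} (G : SimpleGraph V)
    (w : (i : ι) → Fin (p i) → V) (Q : Finset V) : Prop where
  isPendantPath : ∀ i, IsPendantPath G (w i)
  ne : ∀ i j, i ≠ j → ∀ a b, w i a ≠ w j b
  mem_range_or_mem : ∀ i a b, G.Adj (w i a) b → b ∈ Set.range (w i) ∨ b ∈ Q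
  mem_iff : ∀ v, v ∈ Q ↔ ∀ i a, w i a ≠ v

theorem val_map_eq_sum_singleton {β α : Type*} (s : Finset β) (f : β → α) :
    s.val.map f = ∑ x ∈ s, {f x} := by
  rw [Finset.sum_eq_multiset_sum, ← Multiset.sum_map_singleton (s.val.map f), Multiset.map_map,
    Function.comp_def]

namespace IsPendantPathSystem

variable {V ι α : Type*} {p : ι → ℕ} {G : SimpleGraph V} {w : (i : ι) → Fin (p i) → V}
  {Q : Finset V}

theorem sigma_injective (hw : IsPendantPathSystem G w Q) :
    Function.Injective fun s : Σ i, Fin (p i) => w s.1 s.2 := by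
  rintro ⟨i, a⟩ ⟨j, b⟩ hab
  obtain rfl : i = j := by_contra fun hij => hw.ne i j hij a b hab
  exact congrArg (Sigma.mk i) ((hw.isPendantPath i).1 hab)

theorem notMem_iff (hw : IsPendantPathSystem G w Q) {v : V} : v ∉ Q ↔ ∃ i a, w i a = v := by
  rw [hw.mem_iff]
  push Not
  rfl

theorem exists_glue (hw : IsPendantPathSystem G w Q) {ψ : V → α}
    (hψ : ∀ a b, a ∈ Q → b ∈ Q → G.Adj a b → ψ a ≠ ψ b) {f : (i : ι) → Fin (p i) → α}
    (hf : ∀ i a a', G.Adj (w i a) (w i a') → f i a ≠ f i a')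
    (hfψ : ∀ i a, ∀ b ∈ Q, G.Adj (w i a) b → f i a ≠ ψ b) :
    ∃ φ : V → α, (∀ a b, G.Adj a b → φ a ≠ φ b) ∧ (∀ v ∈ Q, φ v = ψ v) ∧
      ∀ i a, φ (w i a) = f i a := by
  let φ : V → α := Function.extend (fun s : Σ i, Fin (p i) => w s.1 s.2) (fun s => f s.1 s.2) ψ
  have hφw (i a) : φ (w i a) = f i a := hw.sigma_injective.extend_apply _ _ ⟨i, a⟩
  have hφQ : ∀ v ∈ Q, φ v = ψ v := fun v hv =>
    Function.extend_apply' _ _ _ fun ⟨s, hs⟩ => (hw.mem_iff v).1 hv s.1 s.2 hs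
  have hpath : ∀ i a b, G.Adj (w i a) b → φ (w i a) ≠ φ b := by
    intro i a b hab
    rcases hw.mem_range_or_mem i a b hab with ⟨a', rfl⟩ | hb
    · rw [hφw, hφw]
      exact hf i a a' hab
    · rw [hφw, hφQ b hb]
      exact hfψ i a b hb hab
  refine ⟨φ, fun a b hab => ?_, hφQ, hφw⟩
  by_cases ha : a ∈ Q
  · by_cases hb : b ∈ Q
    · rw [hφQ a ha, hφQ b hb]
      exact hψ a b ha hb hab
    · obtain ⟨i, c, rfl⟩ := hw.notMem_iff.1 hb
      exact (hpath i c a hab.symm).symm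
  · obtain ⟨i, c, rfl⟩ := hw.notMem_iff.1 ha
    exact hpath i c b hab

variable [Fintype V] [Fintype ι]

theorem map_univ_val (hw : IsPendantPathSystem G w Q) (φ : V → α) :
    Finset.univ.val.map φ = Q.val.map φ + ∑ i, Finset.univ.val.map fun a => φ (w i a) := by
  classical
  have hcompl : Qᶜ = Finset.univ.map ⟨_, hw.sigma_injective⟩ := by
    ext v
    simp only [Finset.mem_compl, hw.notMem_iff, Finset.mem_map, Finset.mem_univ, true_and,
      Function.Embedding.coeFn_mk, Sigma.exists]
  simp only [val_map_eq_sum_singleton]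
  rw [← Finset.sum_add_sum_compl Q, hcompl, Finset.sum_map, Fintype.sum_sigma]
  rfl

theorem card_eq (hw : IsPendantPathSystem G w Q) : Fintype.card V = Q.card + ∑ i, p i := by
  simpa using congrArg Multiset.card (hw.map_univ_val id)

theorem card_mul_le_card (hw : IsPendantPathSystem G w Q) {x : ι → ℕ} {m : ℕ}
    (hx : ∀ i, x i * m ≤ p i) (hsum : Q.card ≤ ∑ i, x i) : Q.card * m ≤ Fintype.card V :=
  calc Q.card * m ≤ (∑ i, x i) * m := by gcongr
    _ = ∑ i, x i * m := Finset.sum_mul ..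
    _ ≤ ∑ i, p i := Finset.sum_le_sum fun i _ => hx i
    _ ≤ Fintype.card V := hw.card_eq ▸ Nat.le_add_left ..

theorem card_le_mul_sum (hw : IsPendantPathSystem G w Q) {x h : ι → ℕ} {m : ℕ}
    (hx : ∀ i, p i + x i ≤ m * h i) (hsum : Q.card ≤ ∑ i, x i) :
    Fintype.card V ≤ m * ∑ i, h i :=
  calc Fintype.card V = Q.card + ∑ i, p i := hw.card_eq
    _ ≤ ∑ i, x i + ∑ i, p i := by gcongr
    _ = ∑ i, (p i + x i) := by rw [Finset.sum_add_distrib, add_comm]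
    _ ≤ ∑ i, m * h i := Finset.sum_le_sum fun i _ => hx i
    _ = m * ∑ i, h i := (Finset.mul_sum ..).symm

theorem exists_coloring_map_eq [DecidableEq α] (hw : IsPendantPathSystem G w Q)
    (hp : ∀ i, 5 ≤ p i) {ψ : V → α} (hψ : ∀ a b, a ∈ Q → b ∈ Q → G.Adj a b → ψ a ≠ ψ b)
    {T : Multiset α} (hT : T.card = Fintype.card V) (hψT : Q.val.map ψ ≤ T)
    (hcount : ∀ j, T.count j ≤ (Q.val.map ψ).count j + ∑ i, (p i - 1) / 2) :
    ∃ φ : V → α, (∀ a b, G.Adj a b → φ a ≠ φ b) ∧ Finset.univ.val.map φ = T := by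
  have hcard : (T - Q.val.map ψ).card = ∑ i, p i := by
    rw [Multiset.card_sub hψT, hT, hw.card_eq, Multiset.card_map, Finset.card_val,
      Nat.add_sub_cancel_left]
  obtain ⟨M, hsum, hM⟩ := exists_sum_eq_of_count_le (s := Finset.univ)
    (h := fun i => (p i - 1) / 2) (fun i _ => by lia) (fun i _ => by have := hp i; lia) hcard
    fun j => by rw [Multiset.count_sub]; exact tsub_le_iff_left.2 (hcount j)
  simp only [Finset.mem_univ, true_imp_iff] at hM
  choose f hfM hf hfout using fun i => (hw.isPendantPath i).exists_coloring ψ (hM i).1 fun j => by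
    have hj := (hM i).2 j
    have hpi := hp i
    lia
  obtain ⟨φ, hφ, hφQ, hφw⟩ := hw.exists_glue hψ hf fun i a b hb =>
    hfout i a b fun ⟨a', ha'⟩ => (hw.mem_iff b).1 hb i a' ha'
  refine ⟨φ, hφ, ?_⟩
  rw [hw.map_univ_val, Multiset.map_congr rfl hφQ]
  simp only [hφw, hfM, hsum, add_tsub_cancel_of_le hψT]

end IsPendantPathSystem

theorem add_le_mul_half {k p x : ℕ} (hk : 3 ≤ k) (hp : k + 2 + x * (k + 1) ≤ p) :
    p + x ≤ k * ((p - 1) / 2) := by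
  obtain rfl | hk := hk.eq_or_lt
  · lia
  · have hfour : 4 * ((p - 1) / 2) ≤ k * ((p - 1) / 2) := Nat.mul_le_mul_right _ hk
    lia

theorem stmt6_general {V ι : Type*} [Fintype V] [Fintype ι] {G : SimpleGraph V} {k : ℕ}
    (hk : 0 < k) {p : ι → ℕ} (hp : ∀ i, 5 ≤ p i) {w : (i : ι) → Fin (p i) → V} {Q : Finset V}
    (hw : IsPendantPathSystem G w Q) (hQ : Q.card * k ≤ Fintype.card V)
    (hV : Fintype.card V ≤ k * ∑ i, (p i - 1) / 2) :
    (∃ φ : V → Fin k, IsProperColoring G φ ∧ IsEquitable φ) ↔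
    (∃ ψ : V → Fin k, ∀ a b : V, a ∈ Q → b ∈ Q → G.Adj a b → ψ a ≠ ψ b) := by
  refine ⟨fun ⟨φ, hφ, _⟩ => ⟨φ, fun a b _ _ => hφ a b⟩, fun ⟨ψ, hψ⟩ => ?_⟩
  obtain ⟨T, hT, hTcount⟩ := exists_multiset_count_eq_div (Fintype.card V) hk
  have hfloor : Fintype.card V / k ≤ (Fintype.card V + k - 1) / k :=
    Nat.div_le_div_right (by lia)
  have hceil : (Fintype.card V + k - 1) / k ≤ ∑ i, (p i - 1) / 2 := by
    rwa [← Nat.ceilDiv_eq_add_pred_div, ceilDiv_le_iff_le_mul hk]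
  have hψT : Q.val.map ψ ≤ T := Multiset.le_iff_count.2 fun j =>
    calc (Q.val.map ψ).count j ≤ Q.card := by simpa using Multiset.count_le_card j (Q.val.map ψ)
      _ ≤ Fintype.card V / k := (Nat.le_div_iff_mul_le hk).2 hQ
      _ ≤ T.count j := by rcases hTcount j with hj | hj <;> rw [hj]; exact hfloor
  obtain ⟨φ, hφ, hφT⟩ := hw.exists_coloring_map_eq hp hψ hT hψT fun j => by
    rcases hTcount j with hj | hj <;> lia
  exact ⟨φ, hφ, isEquitable_iff_count.2 (hφT ▸ hTcount)⟩

/-- If `G` contains pairwise disjoint pendant paths `P_1, …, P_r`, each with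
`p i = k + 2 + c i + x i * (k+1) ≥ 2k + 3` vertices (`x i ≥ 1`, `0 ≤ c i ≤ k`), whose
endpoints' outside neighbors lie in `Q = V(G) \ (P_1 ∪ ⋯ ∪ P_r)`, and `x_1 + ⋯ + x_r ≥ |Q|`,
then `G` is equitably `k`-colorable iff the subgraph induced by `Q` is `k`-colorable. -/
theorem stmt6 {V : Type*} [Fintype V] [DecidableEq V] (G : SimpleGraph V)
    (k r : ℕ) (hk : 3 ≤ k) (p x c : Fin r → ℕ)
    (hx : ∀ i, 1 ≤ x i) (hc : ∀ i, c i ≤ k)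
    (hp : ∀ i, p i = k + 2 + c i + x i * (k + 1))
    (hbig : ∀ i, 2 * k + 3 ≤ p i)
    (w : (i : Fin r) → Fin (p i) → V)
    (hpath : ∀ i, IsPendantPath G (w i))
    (hdisj : ∀ i j : Fin r, i ≠ j → ∀ a b, w i a ≠ w j b)
    (hnbr : ∀ (i : Fin r) (a : Fin (p i)) (b : V), G.Adj (w i a) b →
      (∃ a', b = w i a') ∨ (∀ (j : Fin r) (a' : Fin (p j)), b ≠ w j a'))
    (Q : Finset V) (hQ : ∀ v : V, v ∈ Q ↔ ∀ (i : Fin r) (a : Fin (p i)), w i a ≠ v)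
    (hsum : Q.card ≤ ∑ i, x i) :
    (∃ φ : V → Fin k, IsProperColoring G φ ∧ IsEquitable φ) ↔
    (∃ ψ : V → Fin k, ∀ a b : V, a ∈ Q → b ∈ Q → G.Adj a b → ψ a ≠ ψ b) := by
  have hw : IsPendantPathSystem G w Q :=
    ⟨hpath, hdisj, fun i a b hab => (hnbr i a b hab).imp (fun ⟨a', ha'⟩ => ⟨a', ha'.symm⟩)
      fun hb => (hQ b).2 fun j a' => (hb j a').symm, hQ⟩
  have hlen (i) : k + 2 + x i * (k + 1) ≤ p i := by rw [hp]; lia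
  exact stmt6_general (by lia) (fun i => by have := hbig i; lia) hw
    (hw.card_mul_le_card (fun i => by have := hlen i; rw [mul_add_one] at this; lia) hsum)
    (hw.card_le_mul_sum (fun i => add_le_mul_half hk (hlen i)) hsum)
end

section
/- Let Q be a finite simple graph on n vertices and let k ≥ 1. Then Q admits a proper k-coloring if and only if the graph obtained from Q by adding n(k − 1) isolated vertices admits an equitable k-coloring. -/
/-- The graph obtained from `G` by adding `m` isolated vertices. -/
def addIsolated {W : Type*} (G : SimpleGraph W) (m : ℕ) : SimpleGraph (W ⊕ Fin m) :=
  SimpleGraph.fromRel fun a b =>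
    match a, b with
    | Sum.inl u, Sum.inl v => G.Adj u v
    | _, _ => False

/-!
Isolated vertices can be colored freely, and `n(k - 1)` of them bring the total to `nk`. As no
color class of `Q` exceeds `n`, the new vertices can fill every class up to exactly `n`; conversely
any coloring of the padded graph restricts to `Q`.
-/

section FiberSizes

open Finset

variable {α β ι : Type*} [Fintype α] [Fintype β] [DecidableEq ι]

theorem exists_card_fiber_eq [Fintype ι] (c : ι → ℕ) (hc : ∑ i, c i = Fintype.card α) :
    ∃ f : α → ι, ∀ i, #{a | f a = i} = c i := by
  have e : α ≃ Σ i, Fin (c i) := Fintype.equivOfCardEq (by simp [hc])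
  refine ⟨fun a => (e a).1, fun i => ?_⟩
  have fiberEquiv : {a // (e a).1 = i} ≃ Fin (c i) :=
    (e.subtypeEquiv fun _ => Iff.rfl).trans (Equiv.sigmaSubtype (β := fun i => Fin (c i)) i)
  rw [← Fintype.card_subtype, Fintype.card_congr fiberEquiv, Fintype.card_fin]

theorem card_fiber_sumElim (f : α → ι) (g : β → ι) (i : ι) :
    #{x | Sum.elim f g x = i} = #{a | f a = i} + #{b | g b = i} := by
  simp only [card_filter, Fintype.sum_sum_type]
  rfl

theorem sum_card_fiber [Fintype ι] (f : α → ι) : ∑ i, #{a | f a = i} = Fintype.card α :=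
  (card_eq_sum_card_fiberwise fun a _ => mem_coe.2 (mem_univ (f a))).symm

theorem exists_card_fiber_sumElim_eq [Fintype ι] (f : α → ι) (s : ι → ℕ)
    (hle : ∀ i, #{a | f a = i} ≤ s i) (hs : ∑ i, s i = Fintype.card α + Fintype.card β) :
    ∃ g : β → ι, ∀ i, #{x | Sum.elim f g x = i} = s i := by
  have hdeficit : ∑ i, (s i - #{a | f a = i}) = Fintype.card β := by
    rw [sum_tsub_distrib _ fun i _ => hle i, hs, sum_card_fiber, Nat.add_sub_cancel_left]
  obtain ⟨g, hg⟩ := exists_card_fiber_eq _ hdeficit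
  refine ⟨g, fun i => ?_⟩
  rw [card_fiber_sumElim, hg, Nat.add_sub_cancel' (hle i)]

theorem isEquitable_of_card_fiber_eq {k s : ℕ} {φ : α → Fin k}
    (h : ∀ i, #{a | φ a = i} = s) : IsEquitable φ := by
  have hcard : Fintype.card α = k * s := by simp [← sum_card_fiber φ, h]
  intro i
  left
  rw [h, hcard, Nat.mul_div_cancel_left s i.pos]

theorem exists_isEquitable_sumElim {k s : ℕ} (φ : α → Fin k) (hle : ∀ i, #{a | φ a = i} ≤ s)
    (hs : k * s = Fintype.card α + Fintype.card β) :
    ∃ f : β → Fin k, IsEquitable (Sum.elim φ f) := by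
  obtain ⟨f, hf⟩ := exists_card_fiber_sumElim_eq φ (fun _ => s) hle (by simpa using hs)
  exact ⟨f, isEquitable_of_card_fiber_eq hf⟩

end FiberSizes

section AddIsolated

variable {V W : Type*} {k : ℕ}

theorem addIsolated_eq_sum_bot (G : SimpleGraph V) (m : ℕ) : addIsolated G m = G ⊕g ⊥ := by
  ext (u | u) (v | v)
  · simpa [addIsolated, G.adj_comm v u] using fun h : G.Adj u v => h.ne
  all_goals simp [addIsolated]

theorem isProperColoring_sum_bot_iff (G : SimpleGraph V) (φ : V → Fin k) (f : W → Fin k) :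
    IsProperColoring (G ⊕g ⊥) (Sum.elim φ f) ↔ IsProperColoring G φ := by
  simp [IsProperColoring]

theorem isProperColoring_addIsolated_sumElim_iff {m : ℕ} (G : SimpleGraph V) (φ : V → Fin k)
    (f : Fin m → Fin k) :
    IsProperColoring (addIsolated G m) (Sum.elim φ f) ↔ IsProperColoring G φ := by
  rw [addIsolated_eq_sum_bot, isProperColoring_sum_bot_iff]

end AddIsolated

/-- A graph `Q` on `n` vertices admits a proper `k`-coloring iff the graph obtained from
`Q` by adding `n(k-1)` isolated vertices admits an equitable `k`-coloring. -/
theorem stmt8 {V : Type*} [Fintype V] (Q : SimpleGraph V) (k : ℕ) (hk : 1 ≤ k) :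
    (∃ φ : V → Fin k, IsProperColoring Q φ) ↔
    (∃ ψ : V ⊕ Fin (Fintype.card V * (k - 1)) → Fin k,
      IsProperColoring (addIsolated Q (Fintype.card V * (k - 1))) ψ ∧ IsEquitable ψ) := by
  constructor
  · rintro ⟨φ, hφ⟩
    have hcard : k * Fintype.card V =
        Fintype.card V + Fintype.card (Fin (Fintype.card V * (k - 1))) := by
      rw [Fintype.card_fin, ← mul_one_add, Nat.add_sub_cancel' hk, mul_comm]
    obtain ⟨f, hf⟩ := exists_isEquitable_sumElim φ (fun _ => Finset.card_le_univ _) hcard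
    exact ⟨Sum.elim φ f, (isProperColoring_addIsolated_sumElim_iff Q φ f).2 hφ, hf⟩
  · rintro ⟨ψ, hψ, -⟩
    rw [← Sum.elim_comp_inl_inr ψ, isProperColoring_addIsolated_sumElim_iff] at hψ
    exact ⟨ψ ∘ Sum.inl, hψ⟩
end

section
/- Let G, n, k, ℓ, U, C_1, …, C_r, φ′, the network H, and the capacity function c be as in the flow-network construction for a cluster modulator. If G admits an equitable k-coloring whose restriction to U equals φ′, then there exists a feasible flow f in H under the capacities c with f((s, a_i)) = ℓ for every i ∈ {1, …, k} (equivalently, a feasible flow of value kℓ saturating every arc leaving the source). -/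
/-- The nodes of the flow network `H` for a cluster modulator: a source `src`, a sink
`snk`, a node `col i` for each color `i`, a node `clu i j` for each color `i` and each
cluster index `j`, and a node `ver v` for each vertex `v` of the graph. -/
inductive FNode (V : Type*) (k r : ℕ) where
  | src : FNode V k r
  | snk : FNode V k r
  | col : Fin k → FNode V k r
  | clu : Fin k → Fin r → FNode V k r
  | ver : V → FNode V k r
  deriving DecidableEq, Fintype

/-- The arcs of the flow network `H`: `(src, col i)` for each color `i`; `(col i, snk)`
for each `i`; `(col i, clu i j)` for all `i, j`; `(clu i j, ver v)` whenever `v ∈ C j` and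
no neighbor of `v` in `U` gets color `i` under `φ'`; and `(ver v, snk)` for each
`v ∉ U`. -/
def FArc {V : Type*} [DecidableEq V] (G : SimpleGraph V) (U : Finset V) {k r : ℕ}
    (C : Fin r → Set V) (φ' : V → Fin k) : Set (FNode V k r × FNode V k r) :=
  {e | (∃ i : Fin k, e = (.src, .col i)) ∨
       (∃ i : Fin k, e = (.col i, .snk)) ∨
       (∃ (i : Fin k) (j : Fin r), e = (.col i, .clu i j)) ∨
       (∃ (i : Fin k) (j : Fin r) (v : V), v ∈ C j ∧
          (∀ u ∈ U, G.Adj v u → φ' u ≠ i) ∧ e = (.clu i j, .ver v)) ∨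
       (∃ v : V, v ∉ U ∧ e = (.ver v, .snk))}

/-- The capacities: `ℓ` on each arc `(src, col i)`, `|φ'⁻¹(i) ∩ U|` on each arc
`(col i, snk)`, and `1` on all remaining arcs. -/
def FCap {V : Type*} [DecidableEq V] (U : Finset V) {k r : ℕ} (φ' : V → Fin k)
    (ℓ : ℕ) : FNode V k r × FNode V k r → ℕ
  | (.src, .col _) => ℓ
  | (.col i, .snk) => (U.filter fun v => φ' v = i).card
  | _ => 1

/-- `f` satisfies flow conservation at every node other than the source and the sink. -/
def FConserve {V : Type*} [Fintype V] [DecidableEq V] {k r : ℕ}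
    (f : FNode V k r × FNode V k r → ℕ) : Prop :=
  ∀ z : FNode V k r, z ≠ .src → z ≠ .snk →
    ∑ y : FNode V k r, f (y, z) = ∑ y : FNode V k r, f (z, y)

/-!
Choose `ℓ` vertices from every color class and send one unit of flow along a route for each
chosen vertex `v`: with `i` its color, the route is `src → col i → snk` if `v ∈ U`, and
`src → col i → clu i j → ver v → snk` for a clique `C j ∋ v` otherwise. Flow is conserved because
every route is a walk from the source to the sink, and the arcs `(col i, clu i j)` carry at most
one unit because a clique has at most one vertex of each color.
-/

theorem IsEquitable.div_le_card {V : Type*} [Fintype V] {k : ℕ} {φ : V → Fin k}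
    (h : IsEquitable φ) (i : Fin k) :
    Fintype.card V / k ≤ (Finset.univ.filter fun v => φ v = i).card := by
  rcases h i with h | h
  · exact h.ge
  · exact h ▸ Nat.div_le_div_right (Nat.le_sub_of_add_le (Nat.add_le_add_left i.pos _))

theorem exists_subset_card_fiber_eq {α ι : Type*} [DecidableEq ι]
    {s : Finset α} {f : α → ι} {n : ι → ℕ} (h : ∀ i, n i ≤ (s.filter fun a => f a = i).card) :
    ∃ t ⊆ s, ∀ i, (t.filter fun a => f a = i).card = n i := by
  classical
  choose S hS hcard using fun i => Finset.exists_subset_card_eq (h i)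
  have fiber_eq (i : ι) : ((s.filter fun a => a ∈ S (f a)).filter fun a => f a = i) = S i := by
    ext a
    have : a ∈ S i → a ∈ s ∧ f a = i := fun ha => Finset.mem_filter.mp (hS i ha)
    simp only [Finset.mem_filter]
    grind
  exact ⟨_, Finset.filter_subset _ s, fun i => by rw [fiber_eq, hcard]⟩

section Walk

variable {α : Type*}

/-- The list of arcs of the walk from `s` to `t` whose inner nodes are `q`, in order. -/
def walkArcs (s t : α) (q : List α) : List (α × α) :=
  (s :: q).zip (q ++ [t])

theorem map_fst_walkArcs (s t : α) (q : List α) : (walkArcs s t q).map Prod.fst = s :: q :=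
  List.map_fst_zip (by simp)

theorem map_snd_walkArcs (s t : α) (q : List α) : (walkArcs s t q).map Prod.snd = q ++ [t] :=
  List.map_snd_zip (by simp)

theorem nodup_walkArcs {s t : α} {q : List α} (h : (s :: q).Nodup) : (walkArcs s t q).Nodup :=
  .of_map Prod.fst (by rwa [map_fst_walkArcs])

variable [Fintype α] [DecidableEq α]

theorem sum_count_mk_left (l : List (α × α)) (z : α) :
    ∑ y, l.count (y, z) = (l.map Prod.snd).count z := by
  induction l with
  | nil => simp
  | cons a l ih =>
    obtain ⟨x, w⟩ := a
    by_cases h : w = z <;> simp [List.count_cons, Finset.sum_add_distrib, ih, h]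

theorem sum_count_mk_right (l : List (α × α)) (z : α) :
    ∑ y, l.count (z, y) = (l.map Prod.fst).count z := by
  induction l with
  | nil => simp
  | cons a l ih =>
    obtain ⟨w, x⟩ := a
    by_cases h : w = z <;> simp [List.count_cons, Finset.sum_add_distrib, ih, h]

theorem sum_count_walkArcs_eq {s t z : α} (q : List α) (hs : z ≠ s) (ht : z ≠ t) :
    ∑ y, (walkArcs s t q).count (y, z) = ∑ y, (walkArcs s t q).count (z, y) := by
  rw [sum_count_mk_left, sum_count_mk_right, map_fst_walkArcs, map_snd_walkArcs,
    List.count_cons_of_ne hs.symm, List.count_append, List.count_singleton]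
  simp [ht.symm]

end Walk

section Route

variable {V : Type*} [DecidableEq V] {k r : ℕ}

/-- The arcs of the route from the source to the sink for the vertex `v` of color `φ v`: through
`col (φ v)` only if `v ∈ U`, and further through the cluster `c v` and `v` itself otherwise. The
cluster index `c` is only defined off `U`, since there may be no cluster at all (`r = 0`). -/
def routeArcs (U : Finset V) (φ : V → Fin k) (c : ∀ v, v ∉ U → Fin r) (v : V) :
    List (FNode V k r × FNode V k r) :=
  walkArcs .src .snk
    (if h : v ∈ U then [.col (φ v)] else [.col (φ v), .clu (φ v) (c v h), .ver v])

/-- The flow sending one unit along the route of each vertex of `T`: its value at an arc `e` is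
the number of these routes that use `e`. -/
def routeFlow (U : Finset V) (φ : V → Fin k) (c : ∀ v, v ∉ U → Fin r) (T : Finset V)
    (e : FNode V k r × FNode V k r) : ℕ :=
  (T.filter fun v => e ∈ routeArcs U φ c v).card

variable {U : Finset V} {φ : V → Fin k} {c : ∀ v, v ∉ U → Fin r} {T : Finset V}

theorem mem_routeArcs {v : V} {e : FNode V k r × FNode V k r} :
    e ∈ routeArcs U φ c v ↔
      e = (.src, .col (φ v)) ∨
      (v ∈ U ∧ e = (.col (φ v), .snk)) ∨
      ∃ h : v ∉ U, e = (.col (φ v), .clu (φ v) (c v h)) ∨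
        e = (.clu (φ v) (c v h), .ver v) ∨ e = (.ver v, .snk) := by
  by_cases h : v ∈ U <;> simp [routeArcs, walkArcs, h]

theorem nodup_routeArcs (v : V) : (routeArcs U φ c v).Nodup := by
  apply nodup_walkArcs
  split_ifs <;> simp

theorem routeFlow_eq_sum_count (e : FNode V k r × FNode V k r) :
    routeFlow U φ c T e = ∑ v ∈ T, (routeArcs U φ c v).count e := by
  simp only [routeFlow, Finset.card_filter, (nodup_routeArcs _).count]

theorem fConserve_routeFlow [Fintype V] : FConserve (routeFlow U φ c T) := by
  intro z hsrc hsnk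
  simp only [routeFlow_eq_sum_count]
  rw [Finset.sum_comm, Finset.sum_comm (s := Finset.univ)]
  exact Finset.sum_congr rfl fun v _ => sum_count_walkArcs_eq _ hsrc hsnk

theorem routeFlow_src_col (i : Fin k) :
    routeFlow U φ c T (.src, .col i) = (T.filter fun v => φ v = i).card := by
  simp [routeFlow, mem_routeArcs, eq_comm]

theorem routeFlow_col_snk_le (i : Fin k) :
    routeFlow U φ c T (.col i, .snk) ≤ (U.filter fun v => φ v = i).card := by
  refine Finset.card_le_card fun v hv => ?_
  have hvU : v ∈ U ∧ i = φ v := by simpa [mem_routeArcs] using (Finset.mem_filter.mp hv).2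
  exact Finset.mem_filter.mpr ⟨hvU.1, hvU.2.symm⟩

theorem eq_of_mem_routeArcs (hinj : ∀ v hv w hw, φ v = φ w → c v hv = c w hw → v = w)
    {e : FNode V k r × FNode V k r} (hsrc : ∀ i, e ≠ (.src, .col i))
    (hsnk : ∀ i, e ≠ (.col i, .snk)) {v w : V} (hv : e ∈ routeArcs U φ c v)
    (hw : e ∈ routeArcs U φ c w) : v = w := by
  rcases mem_routeArcs.mp hv with rfl | ⟨-, rfl⟩ | ⟨hvU, rfl | rfl | rfl⟩
  · exact absurd rfl (hsrc _)
  · exact absurd rfl (hsnk _)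
  · obtain ⟨hcol, hwU, -, hclu⟩ : φ v = φ w ∧ ∃ h, φ v = φ w ∧ c v hvU = c w h := by
      simpa [mem_routeArcs] using hw
    exact hinj v hvU w hwU hcol hclu
  all_goals simp_all [mem_routeArcs]

theorem routeFlow_le_fCap {ℓ : ℕ} {φ' : V → Fin k} (hext : ∀ u ∈ U, φ u = φ' u)
    (hinj : ∀ v hv w hw, φ v = φ w → c v hv = c w hw → v = w)
    (hT : ∀ i, (T.filter fun v => φ v = i).card ≤ ℓ) (e : FNode V k r × FNode V k r) :
    routeFlow U φ c T e ≤ FCap U φ' ℓ e := by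
  unfold FCap
  split
  case _ i => exact (routeFlow_src_col i).trans_le (hT i)
  case _ i =>
    refine (routeFlow_col_snk_le i).trans_eq (congrArg Finset.card ?_)
    exact Finset.filter_congr fun u hu => by rw [hext u hu]
  case _ hsrc hsnk =>
    refine Finset.card_le_one.mpr fun v hv w hw => ?_
    exact eq_of_mem_routeArcs hinj hsrc hsnk (Finset.mem_filter.mp hv).2
      (Finset.mem_filter.mp hw).2

theorem mem_fArc_of_mem_routeArcs {G : SimpleGraph V} {C : Fin r → Set V} {φ' : V → Fin k}
    (hproper : IsProperColoring G φ) (hext : ∀ u ∈ U, φ u = φ' u) (hc : ∀ v h, v ∈ C (c v h))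
    {v : V} {e : FNode V k r × FNode V k r} (he : e ∈ routeArcs U φ c v) :
    e ∈ FArc G U C φ' := by
  rcases mem_routeArcs.mp he with rfl | ⟨-, rfl⟩ | ⟨hvU, rfl | rfl | rfl⟩
  · exact .inl ⟨_, rfl⟩
  · exact .inr (.inl ⟨_, rfl⟩)
  · exact .inr (.inr (.inl ⟨_, _, rfl⟩))
  · have hcompat : ∀ u ∈ U, G.Adj v u → φ' u ≠ φ v := fun u hu hadj =>
      hext u hu ▸ (hproper v u hadj).symm
    exact .inr (.inr (.inr (.inl ⟨_, _, v, hc v hvU, hcompat, rfl⟩)))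
  · exact .inr (.inr (.inr (.inr ⟨v, hvU, rfl⟩)))

theorem routeFlow_eq_zero {G : SimpleGraph V} {C : Fin r → Set V} {φ' : V → Fin k}
    (hproper : IsProperColoring G φ) (hext : ∀ u ∈ U, φ u = φ' u) (hc : ∀ v h, v ∈ C (c v h))
    {e : FNode V k r × FNode V k r} (he : e ∉ FArc G U C φ') : routeFlow U φ c T e = 0 :=
  Finset.card_eq_zero.mpr <| Finset.filter_eq_empty_iff.mpr fun _ _ hmem =>
    he (mem_fArc_of_mem_routeArcs hproper hext hc hmem)

end Route

theorem IsProperColoring.eq_of_mem_isClique {V : Type*} {k : ℕ} {G : SimpleGraph V}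
    {φ : V → Fin k} (hproper : IsProperColoring G φ) {K : Set V} (hK : G.IsClique K) {u v : V}
    (hu : u ∈ K) (hv : v ∈ K) (h : φ u = φ v) : u = v :=
  hK.eq hu hv fun hadj => hproper u v hadj h

theorem stmt10_general {V : Type*} [Fintype V] [DecidableEq V] {G : SimpleGraph V}
    {k r ℓ : ℕ} {U : Finset V} {C : Fin r → Set V} {φ φ' : V → Fin k}
    (hCcover : ∀ v : V, v ∉ U → ∃ j : Fin r, v ∈ C j) (hCclique : ∀ j, G.IsClique (C j))
    (hproper : IsProperColoring G φ)
    (hcard : ∀ i, ℓ ≤ (Finset.univ.filter fun v => φ v = i).card)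
    (hext : ∀ u ∈ U, φ u = φ' u) :
    ∃ f : FNode V k r × FNode V k r → ℕ,
      (∀ e, e ∉ FArc G U C φ' → f e = 0) ∧
      (∀ e, f e ≤ FCap U φ' ℓ e) ∧
      FConserve f ∧
      ∀ i : Fin k, f (.src, .col i) = ℓ := by
  choose c hc using hCcover
  obtain ⟨T, -, hT⟩ := exists_subset_card_fiber_eq hcard
  have hinj (v hv w hw) (hφ : φ v = φ w) (hvw : c v hv = c w hw) : v = w :=
    hproper.eq_of_mem_isClique (hCclique _) (hc v hv) (hvw ▸ hc w hw) hφ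
  exact ⟨routeFlow U φ c T, fun e he => routeFlow_eq_zero hproper hext hc he,
    routeFlow_le_fCap hext hinj fun i => (hT i).le, fConserve_routeFlow,
    fun i => (routeFlow_src_col i).trans (hT i)⟩

/-- If `G` admits an equitable `k`-coloring extending the proper coloring `φ'` of the
cluster modulator `U`, then the network `H` admits a feasible flow saturating every arc
leaving the source, i.e. with `f (src, col i) = ℓ = ⌊n/k⌋` for every color `i`. -/
theorem stmt10 {V : Type*} [Fintype V] [DecidableEq V] (G : SimpleGraph V)
    (k r : ℕ) (hk : 1 ≤ k) (U : Finset V) (C : Fin r → Set V)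
    (hCU : ∀ j : Fin r, ∀ v ∈ C j, v ∉ U)
    (hCne : ∀ j : Fin r, (C j).Nonempty)
    (hCcover : ∀ v : V, v ∉ U → ∃ j : Fin r, v ∈ C j)
    (hCdisj : ∀ j j' : Fin r, j ≠ j' → Disjoint (C j) (C j'))
    (hCclique : ∀ j : Fin r, ∀ u ∈ C j, ∀ v ∈ C j, u ≠ v → G.Adj u v)
    (hCsep : ∀ j j' : Fin r, j ≠ j' → ∀ u ∈ C j, ∀ v ∈ C j', ¬ G.Adj u v)
    (φ' : V → Fin k)
    (hφ' : ∀ u ∈ U, ∀ v ∈ U, G.Adj u v → φ' u ≠ φ' v)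
    (hcol : ∃ φ : V → Fin k, IsProperColoring G φ ∧ IsEquitable φ ∧
      ∀ u ∈ U, φ u = φ' u) :
    ∃ f : FNode V k r × FNode V k r → ℕ,
      (∀ e, e ∉ FArc G U C φ' → f e = 0) ∧
      (∀ e, f e ≤ FCap U φ' (Fintype.card V / k) e) ∧
      FConserve f ∧
      ∀ i : Fin k, f (.src, .col i) = Fintype.card V / k := by
  obtain ⟨φ, hproper, hequit, hext⟩ := hcol
  exact stmt10_general hCcover hCclique hproper hequit.div_le_card hext
end

section
/- Let G, n, k, ℓ, U, C_1, …, C_r, φ′, the network H, and the capacity function c be as in the flow-network construction for a cluster modulator. Then G admits an equitable k-coloring whose restriction to U equals φ′ if and only if there exists a function f from the arcs of H to the natural numbers satisfying flow conservation at every node other than s and t, ℓ ≤ f((s, a_i)) ≤ ℓ + 1 for every i ∈ {1, …, k}, f(e) ≤ c(e) for every arc e not of the form (s, a_i), and total value (the sum of f over the arcs leaving s) equal to n. -/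
/-!
A coloring `φ` extending `φ'` routes one unit of flow through every vertex: along
`s → a_{φ v} → t` if `v ∈ U`, and along `s → a_{φ v} → w_{φ v, j} → v → t` if `v ∈ C_j`. The unit
capacity of `(a_i, w_{ij})` is respected because a color occurs at most once in a clique.

Conversely, the arcs into `t` have total capacity `n`, so a flow of value `n` saturates all of them.
Hence every `v ∉ U` receives exactly one unit, which arrives from some `w_{ij}`; color `v` by `i`.
The arc `(w_{ij}, v)` rules out conflicts with `U`, and the capacity of `(a_i, w_{ij})` rules out
conflicts inside a clique. By conservation `f (s, a_i)` is the size of the color class of `i`.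
-/

section Counting

open Finset

theorem eq_ite_of_sum_eq_one {ι : Type*} [Fintype ι] [DecidableEq ι] {d : ι → ℕ}
    (hd : ∑ i, d i = 1) {c : ι} (hc : d c ≠ 0) (i : ι) : d i = if c = i then 1 else 0 := by
  have honly := sum_le_one_iff.1 hd.le c
  split_ifs with hci
  · exact hci ▸ (honly c (mem_univ c) (mem_univ c) hc hc).2
  · by_contra hi
    exact hci (honly i (mem_univ c) (mem_univ i) hc hi).1

theorem add_pred_div_le_div_add_one (n k : ℕ) : (n + k - 1) / k ≤ n / k + 1 := by
  obtain rfl | hk := k.eq_zero_or_pos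
  · simp
  · rw [← Nat.add_div_right n hk]
    exact Nat.div_le_div_right (Nat.sub_le _ _)

theorem add_pred_div_eq_div_add_one {n k : ℕ} (hk : 0 < k) (h : k * (n / k) < n) :
    (n + k - 1) / k = n / k + 1 := by
  refine (add_pred_div_le_div_add_one n k).antisymm ((Nat.le_div_iff_mul_le hk).2 ?_)
  rw [add_one_mul, mul_comm]
  omega

theorem isEquitable_iff {V : Type*} [Fintype V] {k : ℕ} {φ : V → Fin k} :
    IsEquitable φ ↔ ∀ i, Fintype.card V / k ≤ #{v | φ v = i} ∧
      #{v | φ v = i} ≤ Fintype.card V / k + 1 := by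
  refine ⟨fun h i => ?_, fun h i => ?_⟩
  · have hfloor_le : Fintype.card V / k ≤ (Fintype.card V + k - 1) / k :=
      Nat.div_le_div_right (by have := i.pos; omega)
    have hceil_le := add_pred_div_le_div_add_one (Fintype.card V) k
    have hi := h i
    omega
  · refine (Nat.le_and_le_add_one_iff.1 (h i)).imp_right fun hi => ?_
    have hlt : k * (Fintype.card V / k) < Fintype.card V :=
      calc
        k * (Fintype.card V / k) = ∑ _i : Fin k, Fintype.card V / k := by simp
        _ < ∑ c, #{v | φ v = c} :=
          sum_lt_sum (fun c _ => (h c).1) ⟨i, mem_univ i, by omega⟩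
        _ = Fintype.card V := (card_eq_sum_card_fiberwise fun _ _ => mem_univ _).symm
    rw [hi, add_pred_div_eq_div_add_one i.pos hlt]

theorem card_filter_eq_add_compl {V : Type*} [Fintype V] [DecidableEq V] (U : Finset V)
    (p : V → Prop) [DecidablePred p] : #{v | p v} = #{v ∈ U | p v} + #{v ∈ Uᶜ | p v} := by
  simp only [card_filter, sum_add_sum_compl]

end Counting

section Clusters

open Finset

variable {V : Type*} [DecidableEq V] {r : ℕ} {U : Finset V} {C : Fin r → Set V}

open Classical in
theorem sum_ite_mem_cluster (hCU : ∀ j, ∀ v ∈ C j, v ∉ U) (hCcover : ∀ v, v ∉ U → ∃ j, v ∈ C j)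
    (hCdisj : ∀ j j', j ≠ j' → Disjoint (C j) (C j')) (v : V) :
    ∑ j, (if v ∈ C j then 1 else 0) = if v ∈ U then 0 else 1 := by
  split_ifs with hv
  · exact sum_eq_zero fun j _ => if_neg fun hj => hCU j v hj hv
  · obtain ⟨j, hj⟩ := hCcover v hv
    rw [sum_eq_single_of_mem j (mem_univ j), if_pos hj]
    exact fun j' _ hne => if_neg fun hj' => Set.disjoint_left.1 (hCdisj j' j hne) hj' hj

open Classical in
theorem sum_card_filter_cluster [Fintype V] (hCU : ∀ j, ∀ v ∈ C j, v ∉ U)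
    (hCcover : ∀ v, v ∉ U → ∃ j, v ∈ C j) (hCdisj : ∀ j j', j ≠ j' → Disjoint (C j) (C j'))
    (p : V → Prop) [DecidablePred p] : ∑ j, #{v | v ∈ C j ∧ p v} = #{v ∈ Uᶜ | p v} := by
  calc
    ∑ j, #{v | v ∈ C j ∧ p v} = ∑ v with p v, ∑ j, if v ∈ C j then 1 else 0 := by
      rw [sum_comm]
      simp only [← card_filter, filter_filter, and_comm]
    _ = ∑ v with p v, if v ∈ U then 0 else 1 := by
      simp only [sum_ite_mem_cluster hCU hCcover hCdisj]
    _ = #{v ∈ Uᶜ | p v} := by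
      simp only [← ite_not (_ ∈ U), ← card_filter, filter_filter]
      congr 1
      ext v
      simp [and_comm]

end Clusters

namespace FNode

/-- The nodes of the network sorted by kind, which splits a sum over all nodes into sums over the
kinds. -/
def equivSum (V : Type*) (k r : ℕ) :
    FNode V k r ≃ Unit ⊕ Unit ⊕ Fin k ⊕ (Fin k × Fin r) ⊕ V where
  toFun
    | .src => .inl ()
    | .snk => .inr (.inl ())
    | .col i => .inr (.inr (.inl i))
    | .clu i j => .inr (.inr (.inr (.inl (i, j))))
    | .ver v => .inr (.inr (.inr (.inr v)))
  invFun
    | .inl _ => .src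
    | .inr (.inl _) => .snk
    | .inr (.inr (.inl i)) => .col i
    | .inr (.inr (.inr (.inl p))) => .clu p.1 p.2
    | .inr (.inr (.inr (.inr v))) => .ver v
  left_inv x := by cases x <;> rfl
  right_inv x := by rcases x with _ | _ | _ | _ | _ <;> rfl

theorem sum_univ {V M : Type*} [Fintype V] [AddCommMonoid M] {k r : ℕ} (g : FNode V k r → M) :
    ∑ y, g y = g .src + (g .snk + (∑ i, g (.col i) + (∑ i, ∑ j, g (.clu i j) +
      ∑ v, g (.ver v)))) := by
  rw [← (equivSum V k r).symm.sum_comp g]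
  simp only [Fintype.sum_sum_type, Fintype.sum_prod_type, Fintype.sum_unique]
  rfl

end FNode

section Network

open Finset

variable {V : Type*} [DecidableEq V] {k r : ℕ}

theorem FConserve.sum_terminals [Fintype V] {f : FNode V k r × FNode V k r → ℕ}
    (hf : FConserve f) :
    ∑ y, f (y, .src) + ∑ y, f (y, .snk) = ∑ y, f (.src, y) + ∑ y, f (.snk, y) := by
  have hsplit (g : FNode V k r → ℕ) :
      ∑ z, g z = g .src + g .snk + ∑ z ∈ univ \ {.src, .snk}, g z := by
    rw [← sum_sdiff (subset_univ {.src, .snk}), sum_pair (by simp), add_comm]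
  have hinner : ∑ z ∈ univ \ {.src, .snk}, ∑ y, f (y, z) =
      ∑ z ∈ univ \ {.src, .snk}, ∑ y, f (z, y) :=
    sum_congr rfl fun z hz => hf z (by grind) (by grind)
  have htotal : ∑ z, ∑ y, f (y, z) = ∑ z, ∑ y, f (z, y) := sum_comm
  rw [hsplit fun z => ∑ y, f (y, z), hsplit fun z => ∑ y, f (z, y), hinner] at htotal
  exact add_right_cancel htotal

variable {G : SimpleGraph V} {U : Finset V} {C : Fin r → Set V} {φ φ' : V → Fin k}

theorem clu_ver_mem_fArc {i : Fin k} {j : Fin r} {v : V} :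
    (.clu i j, .ver v) ∈ FArc G U C φ' ↔ v ∈ C j ∧ ∀ u ∈ U, G.Adj v u → φ' u ≠ i := by
  simp [FArc]

variable [Fintype V] {f : FNode V k r × FNode V k r → ℕ}

section Support

variable (hf : ∀ e, e ∉ FArc G U C φ' → f e = 0)
include hf

theorem sum_in_src : ∑ y, f (y, .src) = 0 := by
  simp [hf, FArc]

theorem sum_out_src : ∑ y, f (.src, y) = ∑ i, f (.src, .col i) := by
  simp [FNode.sum_univ, hf, FArc]

theorem sum_in_snk :
    ∑ y, f (y, .snk) = ∑ i, f (.col i, .snk) + ∑ v ∈ Uᶜ, f (.ver v, .snk) := by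
  have hU : ∑ v ∈ U, f (.ver v, .snk) = 0 := sum_eq_zero fun v hv => hf _ (by simpa [FArc])
  simp [FNode.sum_univ, hf, FArc, ← sum_add_sum_compl U fun v => f (.ver v, .snk), hU]

theorem sum_out_snk : ∑ y, f (.snk, y) = 0 := by
  simp [hf, FArc]

theorem sum_in_col (i : Fin k) : ∑ y, f (y, .col i) = f (.src, .col i) := by
  simp [FNode.sum_univ, hf, FArc]

theorem sum_out_col (i : Fin k) :
    ∑ y, f (.col i, y) = f (.col i, .snk) + ∑ j, f (.col i, .clu i j) := by
  have hclu : ∑ i', ∑ j, f (.col i, .clu i' j) = ∑ j, f (.col i, .clu i j) :=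
    sum_eq_single_of_mem i (mem_univ i) fun i' _ hne =>
      sum_eq_zero fun j _ => hf _ (by simpa [FArc, eq_comm] using hne)
  simp [FNode.sum_univ, hf, FArc, hclu]

theorem sum_in_clu (i : Fin k) (j : Fin r) : ∑ y, f (y, .clu i j) = f (.col i, .clu i j) := by
  have hcol : ∑ i', f (.col i', .clu i j) = f (.col i, .clu i j) :=
    sum_eq_single_of_mem i (mem_univ i) fun i' _ hne => hf _ (by simpa [FArc, eq_comm] using hne)
  simp [FNode.sum_univ, hf, FArc, hcol]

theorem sum_out_clu (i : Fin k) (j : Fin r) :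
    ∑ y, f (.clu i j, y) = ∑ v, f (.clu i j, .ver v) := by
  simp [FNode.sum_univ, hf, FArc]

theorem sum_in_ver (v : V) : ∑ y, f (y, .ver v) = ∑ i, ∑ j, f (.clu i j, .ver v) := by
  simp [FNode.sum_univ, hf, FArc]

theorem sum_out_ver (v : V) : ∑ y, f (.ver v, y) = f (.ver v, .snk) := by
  simp [FNode.sum_univ, hf, FArc]

theorem fConserve_iff :
    FConserve f ↔
      (∀ i, f (.src, .col i) = f (.col i, .snk) + ∑ j, f (.col i, .clu i j)) ∧
      (∀ i j, f (.col i, .clu i j) = ∑ v, f (.clu i j, .ver v)) ∧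
      ∀ v, ∑ i, ∑ j, f (.clu i j, .ver v) = f (.ver v, .snk) := by
  refine ⟨fun h => ⟨fun i => ?_, fun i j => ?_, fun v => ?_⟩, ?_⟩
  · rw [← sum_in_col hf, ← sum_out_col hf, h (.col i) (by simp) (by simp)]
  · rw [← sum_in_clu hf, ← sum_out_clu hf, h (.clu i j) (by simp) (by simp)]
  · rw [← sum_in_ver hf, ← sum_out_ver hf, h (.ver v) (by simp) (by simp)]
  · rintro ⟨hcol, hclu, hver⟩ (_ | _ | i | ⟨i, j⟩ | v) hsrc hsnk
    · exact absurd rfl hsrc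
    · exact absurd rfl hsnk
    · rw [sum_in_col hf, sum_out_col hf, hcol]
    · rw [sum_in_clu hf, sum_out_clu hf, hclu]
    · rw [sum_in_ver hf, sum_out_ver hf, hver]

end Support

/-- A flow of value `n` in the network `H` that respects the capacities of all arcs other than
`(src, col i)`; the bounds on those arcs are left out, so that the class sizes of the corresponding
colorings are arbitrary. Since `ℓ` is the capacity of just those arcs, it imposes no condition. -/
structure IsFullFlow (G : SimpleGraph V) (U : Finset V) (C : Fin r → Set V) (φ' : V → Fin k)
    (ℓ : ℕ) (f : FNode V k r × FNode V k r → ℕ) : Prop where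
  eq_zero : ∀ e, e ∉ FArc G U C φ' → f e = 0
  conserve : FConserve f
  le_cap : ∀ e : FNode V k r × FNode V k r, (∀ i, e ≠ (.src, .col i)) → f e ≤ FCap U φ' ℓ e
  value_eq : ∑ y, f (.src, y) = Fintype.card V

/-! ### From colorings to flows -/

open Classical in
/-- The flow that sends one unit through every vertex along its color; it turns a coloring that
extends `φ'` into a flow in `H`. -/
noncomputable def colorFlow (U : Finset V) (C : Fin r → Set V) (φ : V → Fin k) :
    FNode V k r × FNode V k r → ℕ
  | (.src, .col i) => #{v | φ v = i}
  | (.col i, .snk) => #{v ∈ U | φ v = i}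
  | (.col i, .clu i' j) => if i = i' then #{v | v ∈ C j ∧ φ v = i} else 0
  | (.clu i j, .ver v) => if v ∈ C j ∧ φ v = i then 1 else 0
  | (.ver v, .snk) => if v ∈ U then 0 else 1
  | _ => 0

theorem colorFlow_eq_zero (hφ : IsProperColoring G φ) (hext : ∀ u ∈ U, φ u = φ' u)
    (e : FNode V k r × FNode V k r) (he : e ∉ FArc G U C φ') : colorFlow U C φ e = 0 := by
  obtain ⟨x, y⟩ := e
  cases x <;> cases y <;> simp only [colorFlow]
  case src.col | col.snk | ver.snk => simp_all [FArc]
  case col.clu i i' j =>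
    have hne : i ≠ i' := fun h => he (by simp [FArc, h])
    simp [hne]
  case clu.ver i j v =>
    refine if_neg fun ⟨hvj, hvi⟩ => he (clu_ver_mem_fArc.2 ⟨hvj, fun u hu huv => ?_⟩)
    rw [← hext u hu, ← hvi]
    exact (hφ v u huv).symm

theorem fConserve_colorFlow (hCU : ∀ j, ∀ v ∈ C j, v ∉ U) (hCcover : ∀ v, v ∉ U → ∃ j, v ∈ C j)
    (hCdisj : ∀ j j', j ≠ j' → Disjoint (C j) (C j')) (φ : V → Fin k) :
    FConserve (colorFlow U C φ) := by
  classical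
  -- Conservation does not see the edges of the graph, and every coloring of `⊥` is proper.
  have hbot : IsProperColoring ⊥ φ := fun _ _ hadj => hadj.elim
  refine (fConserve_iff (colorFlow_eq_zero hbot fun _ _ => rfl)).2
    ⟨fun i => ?_, fun i j => ?_, fun v => ?_⟩
  · simp only [colorFlow, if_true]
    rw [card_filter_eq_add_compl U, sum_card_filter_cluster hCU hCcover hCdisj]
  · simp [colorFlow]
  · simp only [colorFlow]
    rw [sum_comm, ← sum_ite_mem_cluster hCU hCcover hCdisj v]
    simp [ite_and]

theorem colorFlow_le_fCap (hCclique : ∀ j, ∀ u ∈ C j, ∀ v ∈ C j, u ≠ v → G.Adj u v)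
    (hφ : IsProperColoring G φ) (hext : ∀ u ∈ U, φ u = φ' u) (ℓ : ℕ)
    (e : FNode V k r × FNode V k r) (he : ∀ i, e ≠ (.src, .col i)) :
    colorFlow U C φ e ≤ FCap U φ' ℓ e := by
  classical
  obtain ⟨x, y⟩ := e
  cases x <;> cases y <;> simp only [colorFlow, FCap, zero_le]
  case src.col i => exact absurd rfl (he i)
  case col.snk i => exact (congrArg card (filter_congr fun u hu => by rw [hext u hu])).le
  case col.clu i i' j =>
    have hone : #{v | v ∈ C j ∧ φ v = i} ≤ 1 := by
      simp only [card_le_one, mem_filter_univ]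
      rintro u ⟨huj, hui⟩ v ⟨hvj, hvi⟩
      by_contra hne
      exact hφ u v (hCclique j u huj v hvj hne) (hui.trans hvi.symm)
    split_ifs <;> omega
  all_goals split_ifs <;> omega

theorem isFullFlow_colorFlow (hCU : ∀ j, ∀ v ∈ C j, v ∉ U)
    (hCcover : ∀ v, v ∉ U → ∃ j, v ∈ C j) (hCdisj : ∀ j j', j ≠ j' → Disjoint (C j) (C j'))
    (hCclique : ∀ j, ∀ u ∈ C j, ∀ v ∈ C j, u ≠ v → G.Adj u v)
    (hφ : IsProperColoring G φ) (hext : ∀ u ∈ U, φ u = φ' u) (ℓ : ℕ) :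
    IsFullFlow G U C φ' ℓ (colorFlow U C φ) where
  eq_zero := colorFlow_eq_zero hφ hext
  conserve := fConserve_colorFlow hCU hCcover hCdisj φ
  le_cap := colorFlow_le_fCap hCclique hφ hext ℓ
  value_eq := by
    rw [sum_out_src (colorFlow_eq_zero hφ hext)]
    exact (card_eq_sum_card_fiberwise fun _ _ => mem_univ _).symm

/-! ### From flows to colorings -/

/-- `φ` is a coloring read off the flow `f`: it extends `φ'`, and every vertex outside `U` receives
flow from a node `clu i j` of its own color `i`. -/
structure IsInducedColoring (U : Finset V) (φ' : V → Fin k)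
    (f : FNode V k r × FNode V k r → ℕ) (φ : V → Fin k) : Prop where
  eqOn : ∀ u ∈ U, φ u = φ' u
  exists_clu : ∀ v, v ∉ U → ∃ j, f (.clu (φ v) j, .ver v) ≠ 0

namespace IsFullFlow

variable {ℓ : ℕ} (hf : IsFullFlow G U C φ' ℓ f)
include hf

theorem sum_in_snk_eq_card :
    ∑ i, f (.col i, .snk) + ∑ v ∈ Uᶜ, f (.ver v, .snk) = Fintype.card V := by
  have hterminals := hf.conserve.sum_terminals
  rwa [sum_in_src hf.eq_zero, sum_out_snk hf.eq_zero, zero_add, add_zero, hf.value_eq,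
    sum_in_snk hf.eq_zero] at hterminals

theorem saturates_snk :
    (∀ i, f (.col i, .snk) = #{v ∈ U | φ' v = i}) ∧ ∀ v, v ∉ U → f (.ver v, .snk) = 1 := by
  have hcol_le : ∀ i ∈ univ, f (.col i, .snk) ≤ #{v ∈ U | φ' v = i} :=
    fun i _ => hf.le_cap _ (by simp)
  have hver_le : ∀ v ∈ Uᶜ, f (.ver v, .snk) ≤ 1 := fun v _ => hf.le_cap (.ver v, .snk) (by simp)
  have hcap : ∑ i, #{v ∈ U | φ' v = i} + ∑ v ∈ Uᶜ, 1 = Fintype.card V := by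
    rw [← card_eq_sum_card_fiberwise fun _ _ => mem_univ _, ← card_eq_sum_ones,
      card_add_card_compl]
  obtain ⟨hcol, hver⟩ := (add_eq_add_iff_eq_and_eq (sum_le_sum hcol_le) (sum_le_sum hver_le)).1
    (hf.sum_in_snk_eq_card.trans hcap.symm)
  exact ⟨fun i => (sum_eq_sum_iff_of_le hcol_le).1 hcol i (mem_univ i),
    fun v hv => (sum_eq_sum_iff_of_le hver_le).1 hver v (mem_compl.2 hv)⟩

theorem sum_clu_ver_eq_one {v : V} (hv : v ∉ U) : ∑ i, ∑ j, f (.clu i j, .ver v) = 1 :=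
  (((fConserve_iff hf.eq_zero).1 hf.conserve).2.2 v).trans (hf.saturates_snk.2 v hv)

theorem clu_ver_eq_zero {v : V} (hv : v ∈ U) (i : Fin k) (j : Fin r) :
    f (.clu i j, .ver v) = 0 := by
  have hsum : ∑ i, ∑ j, f (.clu i j, .ver v) = 0 :=
    (((fConserve_iff hf.eq_zero).1 hf.conserve).2.2 v).trans
      (hf.eq_zero _ (by simpa [FArc]))
  simp_all

theorem clu_ver_mem {i : Fin k} {j : Fin r} {v : V} (h : f (.clu i j, .ver v) ≠ 0) :
    v ∈ C j ∧ ∀ u ∈ U, G.Adj v u → φ' u ≠ i :=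
  clu_ver_mem_fArc.1 (not_imp_comm.1 (hf.eq_zero _) h)

theorem eq_of_clu_ver_ne_zero {i : Fin k} {j : Fin r} {u v : V}
    (hu : f (.clu i j, .ver u) ≠ 0) (hv : f (.clu i j, .ver v) ≠ 0) : u = v := by
  have hle : ∑ w, f (.clu i j, .ver w) ≤ 1 := by
    rw [← ((fConserve_iff hf.eq_zero).1 hf.conserve).2.1 i j]
    exact hf.le_cap (.col i, .clu i j) (by simp)
  exact (sum_le_one_iff.1 hle u v (mem_univ u) (mem_univ v) hu hv).1

theorem exists_isInducedColoring : ∃ φ, IsInducedColoring U φ' f φ := by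
  have hcolor (v) : ∃ i, (v ∈ U → i = φ' v) ∧ (v ∉ U → ∃ j, f (.clu i j, .ver v) ≠ 0) := by
    by_cases hv : v ∈ U
    · exact ⟨φ' v, fun _ => rfl, fun h => absurd hv h⟩
    · obtain ⟨i, -, hi⟩ :=
        exists_ne_zero_of_sum_ne_zero ((hf.sum_clu_ver_eq_one hv).trans_ne one_ne_zero)
      obtain ⟨j, -, hj⟩ := exists_ne_zero_of_sum_ne_zero hi
      exact ⟨i, fun h => absurd h hv, fun _ => ⟨j, hj⟩⟩
  choose φ heq hclu using hcolor
  exact ⟨φ, heq, hclu⟩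

end IsFullFlow

namespace IsInducedColoring

variable {ℓ : ℕ} (hφ : IsInducedColoring U φ' f φ) (hf : IsFullFlow G U C φ' ℓ f)
include hφ hf

theorem sum_clu_ver_eq_ite {v : V} (hv : v ∉ U) (i : Fin k) :
    ∑ j, f (.clu i j, .ver v) = if φ v = i then 1 else 0 := by
  obtain ⟨j, hj⟩ := hφ.exists_clu v hv
  exact eq_ite_of_sum_eq_one (hf.sum_clu_ver_eq_one hv)
    (fun h => hj (sum_eq_zero_iff.1 h j (mem_univ j))) i

theorem card_colorClass (i : Fin k) : #{v | φ v = i} = f (.src, .col i) := by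
  obtain ⟨hcol, hclu, -⟩ := (fConserve_iff hf.eq_zero).1 hf.conserve
  have hU : #{v ∈ U | φ v = i} = f (.col i, .snk) := by
    rw [hf.saturates_snk.1 i, filter_congr fun u hu => by rw [hφ.eqOn u hu]]
  have hUc : #{v ∈ Uᶜ | φ v = i} = ∑ j, f (.col i, .clu i j) :=
    calc
      #{v ∈ Uᶜ | φ v = i} = ∑ v ∈ Uᶜ, ∑ j, f (.clu i j, .ver v) := by
        rw [card_filter]
        exact sum_congr rfl fun v hv => (hφ.sum_clu_ver_eq_ite hf (mem_compl.1 hv) i).symm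
      _ = ∑ v, ∑ j, f (.clu i j, .ver v) := by
        have hzero : ∑ v ∈ U, ∑ j, f (.clu i j, .ver v) = 0 :=
          sum_eq_zero fun v hv => sum_eq_zero fun j _ => hf.clu_ver_eq_zero hv i j
        rw [← sum_add_sum_compl U, hzero, zero_add]
      _ = ∑ j, f (.col i, .clu i j) := by
        simp only [hclu]
        exact sum_comm
  rw [card_filter_eq_add_compl U, hU, hUc, hcol]

theorem ne_of_adj_mem {u v : V} (hu : u ∈ U) (hv : v ∉ U) (huv : G.Adj v u) : φ u ≠ φ v := by
  obtain ⟨j, hj⟩ := hφ.exists_clu v hv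
  rw [hφ.eqOn u hu]
  exact (hf.clu_ver_mem hj).2 u hu huv

theorem ne_of_adj_notMem (hCsep : ∀ j j', j ≠ j' → ∀ u ∈ C j, ∀ v ∈ C j', ¬ G.Adj u v) {u v : V}
    (hu : u ∉ U) (hv : v ∉ U) (huv : G.Adj u v) : φ u ≠ φ v := by
  intro heq
  obtain ⟨j, hj⟩ := hφ.exists_clu u hu
  obtain ⟨j', hj'⟩ := hφ.exists_clu v hv
  obtain rfl : j = j' := by
    by_contra hne
    exact hCsep j j' hne u (hf.clu_ver_mem hj).1 v (hf.clu_ver_mem hj').1 huv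
  exact huv.ne (hf.eq_of_clu_ver_ne_zero hj (heq ▸ hj'))

theorem isProperColoring (hCsep : ∀ j j', j ≠ j' → ∀ u ∈ C j, ∀ v ∈ C j', ¬ G.Adj u v)
    (hφ' : ∀ u ∈ U, ∀ v ∈ U, G.Adj u v → φ' u ≠ φ' v) : IsProperColoring G φ := by
  intro u v huv
  by_cases hu : u ∈ U <;> by_cases hv : v ∈ U
  · rw [hφ.eqOn u hu, hφ.eqOn v hv]
    exact hφ' u hu v hv huv
  · exact hφ.ne_of_adj_mem hf hu hv huv.symm
  · exact (hφ.ne_of_adj_mem hf hv hu huv).symm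
  · exact hφ.ne_of_adj_notMem hf hCsep hu hv huv

end IsInducedColoring

end Network

/-- `G` admits an equitable `k`-coloring extending the proper coloring `φ'` of the cluster
modulator `U` if and only if the network `H` admits a flow `f` satisfying conservation,
`ℓ ≤ f (src, col i) ≤ ℓ + 1` for every color `i`, `f e ≤ c e` on every arc not of the form
`(src, col i)`, and total value (the flow out of the source) equal to `n`. -/
theorem stmt11 {V : Type*} [Fintype V] [DecidableEq V] (G : SimpleGraph V)
    (k r : ℕ) (hk : 1 ≤ k) (U : Finset V) (C : Fin r → Set V)
    (hCU : ∀ j : Fin r, ∀ v ∈ C j, v ∉ U)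
    (hCne : ∀ j : Fin r, (C j).Nonempty)
    (hCcover : ∀ v : V, v ∉ U → ∃ j : Fin r, v ∈ C j)
    (hCdisj : ∀ j j' : Fin r, j ≠ j' → Disjoint (C j) (C j'))
    (hCclique : ∀ j : Fin r, ∀ u ∈ C j, ∀ v ∈ C j, u ≠ v → G.Adj u v)
    (hCsep : ∀ j j' : Fin r, j ≠ j' → ∀ u ∈ C j, ∀ v ∈ C j', ¬ G.Adj u v)
    (φ' : V → Fin k)
    (hφ' : ∀ u ∈ U, ∀ v ∈ U, G.Adj u v → φ' u ≠ φ' v) :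
    (∃ φ : V → Fin k, IsProperColoring G φ ∧ IsEquitable φ ∧ ∀ u ∈ U, φ u = φ' u) ↔
    (∃ f : FNode V k r × FNode V k r → ℕ,
      (∀ e, e ∉ FArc G U C φ' → f e = 0) ∧
      FConserve f ∧
      (∀ i : Fin k, Fintype.card V / k ≤ f (.src, .col i) ∧
        f (.src, .col i) ≤ Fintype.card V / k + 1) ∧
      (∀ e : FNode V k r × FNode V k r, (∀ i : Fin k, e ≠ (.src, .col i)) →
        f e ≤ FCap U φ' (Fintype.card V / k) e) ∧
      (∑ y : FNode V k r, f (.src, y)) = Fintype.card V) := by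
  constructor
  · rintro ⟨φ, hφ, hequit, hext⟩
    have hflow : IsFullFlow G U C φ' (Fintype.card V / k) (colorFlow U C φ) :=
      isFullFlow_colorFlow hCU hCcover hCdisj hCclique hφ hext _
    exact ⟨_, hflow.eq_zero, hflow.conserve, isEquitable_iff.1 hequit, hflow.le_cap,
      hflow.value_eq⟩
  · rintro ⟨f, hsupp, hcons, hbounds, hcap, hvalue⟩
    have hf : IsFullFlow G U C φ' (Fintype.card V / k) f := ⟨hsupp, hcons, hcap, hvalue⟩
    obtain ⟨φ, hφ⟩ := hf.exists_isInducedColoring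
    refine ⟨φ, hφ.isProperColoring hf hCsep hφ', isEquitable_iff.2 fun i => ?_, hφ.eqOn⟩
    rw [hφ.card_colorClass hf]
    exact hbounds i
end

section
/- Let G be a finite simple graph on n vertices, let r ≥ 1, let L be a list assignment on G with colors {1, …, r}, and let h : {1, …, r} → ℕ satisfy h(1) + ⋯ + h(r) = n. Let h* = max_i h(i), and let G′ be the graph obtained from G by adding, for each color i, a set D_i of h* − h(i) new isolated vertices, with the list assignment L′ extending L by L′(d) = {i} for every d ∈ D_i. Then G admits a proper coloring φ respecting L with |φ⁻¹(i)| = h(i) for every color i, if and only if G′ admits a proper coloring φ′ respecting L′ in which every color class has size exactly h* (equivalently, an equitable r-coloring of G′ respecting L′, since G′ has r·h* vertices). -/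
/-- The graph obtained from `G` by adding, for each index `i`, a family `D i` of `m i` new
isolated vertices. -/
def addIsolatedFam {V : Type*} (G : SimpleGraph V) {ι : Type*} (m : ι → ℕ) :
    SimpleGraph (V ⊕ Σ i : ι, Fin (m i)) :=
  SimpleGraph.fromRel fun a b =>
    match a, b with
    | Sum.inl u, Sum.inl v => G.Adj u v
    | _, _ => False

theorem addIsolatedFam_eq_sum_bot {V ι : Type*} (G : SimpleGraph V) (m : ι → ℕ) :
    addIsolatedFam G m = G ⊕g (⊥ : SimpleGraph (Σ i : ι, Fin (m i))) := by
  ext (u | d) (v | e)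
  · simpa [addIsolatedFam, G.adj_comm v u] using SimpleGraph.Adj.ne
  all_goals simp [addIsolatedFam]

theorem isProperColoring_sum_iff {V W : Type*} {k : ℕ} {G : SimpleGraph V} {H : SimpleGraph W}
    {ψ : V ⊕ W → Fin k} :
    IsProperColoring (G ⊕g H) ψ ↔
      IsProperColoring G (ψ ∘ Sum.inl) ∧ IsProperColoring H (ψ ∘ Sum.inr) := by
  simp [IsProperColoring, Sum.forall]

theorem isProperColoring_bot {W : Type*} {k : ℕ} (ψ : W → Fin k) :
    IsProperColoring (⊥ : SimpleGraph W) ψ :=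
  fun _ _ hadj => hadj.elim

theorem isProperColoring_addIsolatedFam_iff {V ι : Type*} {k : ℕ} {G : SimpleGraph V}
    {m : ι → ℕ} {ψ : (V ⊕ Σ i : ι, Fin (m i)) → Fin k} :
    IsProperColoring (addIsolatedFam G m) ψ ↔ IsProperColoring G (ψ ∘ Sum.inl) := by
  rw [addIsolatedFam_eq_sum_bot, isProperColoring_sum_iff, and_iff_left (isProperColoring_bot _)]

theorem card_filter_sum {V W : Type*} [Fintype V] [Fintype W] (p : V ⊕ W → Prop)
    [DecidablePred p] :
    (Finset.univ.filter p).card =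
      (Finset.univ.filter fun v => p (Sum.inl v)).card +
        (Finset.univ.filter fun w => p (Sum.inr w)).card := by
  simp only [Finset.card_filter, Fintype.sum_sum_type]

theorem card_filter_sigma_fst_eq {ι : Type*} [Fintype ι] [DecidableEq ι] {α : ι → Type*}
    [∀ i, Fintype (α i)] (i : ι) :
    (Finset.univ.filter fun d : Σ j, α j => d.1 = i).card = Fintype.card (α i) := by
  rw [← Fintype.card_subtype, Fintype.card_congr (Equiv.sigmaSubtype i)]

theorem card_filter_eq_add_of_inr_eq_fst {V ι : Type*} [Fintype V] [Fintype ι] [DecidableEq ι]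
    {m : ι → ℕ} {ψ : (V ⊕ Σ i : ι, Fin (m i)) → ι} (hψ : ∀ d, ψ (Sum.inr d) = d.1) (i : ι) :
    (Finset.univ.filter fun z => ψ z = i).card =
      (Finset.univ.filter fun v => ψ (Sum.inl v) = i).card + m i := by
  simp only [card_filter_sum fun z => ψ z = i, hψ, card_filter_sigma_fst_eq, Fintype.card_fin]

theorem stmt13_general {V : Type*} [Fintype V] (G : SimpleGraph V) {r : ℕ}
    (L : V → Set (Fin r)) (h m : Fin r → ℕ) :
    (∃ φ : V → Fin r, IsProperColoring G φ ∧ (∀ v : V, φ v ∈ L v) ∧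
      ∀ i : Fin r, (Finset.univ.filter fun v => φ v = i).card = h i) ↔
    (∃ ψ : (V ⊕ Σ i : Fin r, Fin (m i)) → Fin r,
      IsProperColoring (addIsolatedFam G m) ψ ∧
      (∀ v : V, ψ (Sum.inl v) ∈ L v) ∧
      (∀ d : Σ i : Fin r, Fin (m i), ψ (Sum.inr d) = d.1) ∧
      ∀ i : Fin r, (Finset.univ.filter fun z => ψ z = i).card = h i + m i) := by
  constructor
  · rintro ⟨φ, hφ, hL, hcard⟩
    refine ⟨Sum.elim φ Sigma.fst, isProperColoring_addIsolatedFam_iff.2 hφ, hL,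
      fun _ => rfl, fun i => ?_⟩
    rw [card_filter_eq_add_of_inr_eq_fst (fun _ => rfl), ← hcard i]
    rfl
  · rintro ⟨ψ, hψ, hL, hD, hcard⟩
    refine ⟨ψ ∘ Sum.inl, isProperColoring_addIsolatedFam_iff.1 hψ, hL, fun i => ?_⟩
    exact Nat.add_right_cancel ((card_filter_eq_add_of_inr_eq_fst hD i).symm.trans (hcard i))

/-- `G` admits a proper coloring respecting the list assignment `L` in which color `i` is
used exactly `h i` times, if and only if the graph `G'` obtained by adding, for each color
`i`, a set `D_i` of `h* − h i` new isolated vertices (with singleton list `{i}`) admits a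
proper coloring respecting the extended lists in which every color class has size exactly
`h* = max_i h i`. -/
theorem stmt13 {V : Type*} [Fintype V] (G : SimpleGraph V) (r : ℕ) (hr : 1 ≤ r)
    (L : V → Set (Fin r)) (h : Fin r → ℕ)
    (hsum : ∑ i : Fin r, h i = Fintype.card V)
    (hstar : ℕ) (hhstar : hstar = Finset.univ.sup h) :
    (∃ φ : V → Fin r, IsProperColoring G φ ∧ (∀ v : V, φ v ∈ L v) ∧
      ∀ i : Fin r, (Finset.univ.filter fun v => φ v = i).card = h i) ↔
    (∃ ψ : (V ⊕ Σ i : Fin r, Fin (hstar - h i)) → Fin r,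
      IsProperColoring (addIsolatedFam G (fun i : Fin r => hstar - h i)) ψ ∧
      (∀ v : V, ψ (Sum.inl v) ∈ L v) ∧
      (∀ d : Σ i : Fin r, Fin (hstar - h i), ψ (Sum.inr d) = d.1) ∧
      ∀ i : Fin r, (Finset.univ.filter fun z => ψ z = i).card = hstar) := by
  have hle (i : Fin r) : h i ≤ hstar := hhstar ▸ Finset.le_sup (Finset.mem_univ i)
  simpa only [Nat.add_sub_of_le (hle _)] using stmt13_general G L h fun i => hstar - h i
end
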